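/- Fix θ₀ ∈ Ḣ¹_⋄, f ∈ Ḣ_⋄ and t > 0. There exists a compact linear operator Λ_{θ₀,t} : Ḣ¹_⋄ → Ḣ_⋄ such that sup over θ ∈ Ḣ¹_⋄ with ‖θ − θ₀‖_{L²} < ε of ‖u_θ(t) − u_{θ₀}(t) − Λ_{θ₀,t}[θ − θ₀]‖_{L²} / ‖θ − θ₀‖_{L²} → 0 as ε → 0. Moreover, for ξ ∈ Ḣ¹_⋄ the map t ↦ Λ_{θ₀,t}[ξ] solves the linear PDE dU/dt − νΔU + B[u_{θ₀}, U] + B[U, u_{θ₀}] = 0 with U(0) = ξ, and for any T > 0 and B > 0 there is c = c(ν, ‖f‖_{L²}, T, B) > 0 such that for all θ₀ with ‖θ₀‖_{Ḣ¹} ≤ B and all θ ∈ Ḣ¹_⋄: sup_{0≤t≤T} ‖u_θ(t) − u_{θ₀}(t) − Λ_{θ₀,t}[θ − θ₀]‖_{L²} ≤ c ‖θ − θ₀‖²_{L²}. -/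

import Mathlib

open MeasureTheory Set
open scoped BigOperators

noncomputable section

namespace NS2D

/-- Nonzero Fourier frequencies of the 2D torus `Ω = 𝕋²`. -/
def Freq : Type := {k : ℤ × ℤ // k ≠ 0}

/-- Squared Euclidean modulus `|k|²` of a frequency. -/
def knormSq (k : Freq) : ℝ := (k.1.1 : ℝ) ^ 2 + (k.1.2 : ℝ) ^ 2

/-- Eigenvalue `λ_k = 4π²|k|²` of the periodic Laplacian `−Δ`. -/
def lam (k : Freq) : ℝ := 4 * Real.pi ^ 2 * knormSq k

/-- A divergence-free mean-zero vector field `u ∈ Ḣ_⋄` (or, more generally, an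
element of the scale `Ḣ^α_⋄`) on the torus is represented by its Fourier
coefficients `c k` along the orthonormal basis
`e_k(x) = |k|⁻¹ (k₂, −k₁) exp(2πi k·x)` of divergence-free fields. -/
abbrev Coef : Type := Freq → ℂ

/-- Negation of a frequency. -/
def fneg (k : Freq) : Freq := ⟨-k.1, neg_ne_zero.mpr k.2⟩

/-- The conjugacy condition expressing that the coefficients `c` represent a
real-valued vector field (note `e_{−k} = − conj e_k`). -/
def IsReal (c : Coef) : Prop := ∀ k, c (fneg k) = - (starRingEnd ℂ) (c k)

/-- Squared homogeneous Sobolev norm `‖·‖²_{Ḣ^α} = Σ_k λ_k^α |c k|²`. -/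
def hSq (α : ℝ) (c : Coef) : ℝ := ∑' k, lam k ^ α * ‖c k‖ ^ 2

/-- Homogeneous Sobolev norm `‖·‖_{Ḣ^α}`. -/
def hN (α : ℝ) (c : Coef) : ℝ := Real.sqrt (hSq α c)

/-- Finiteness of the `Ḣ^α`-norm. -/
def FinH (α : ℝ) (c : Coef) : Prop := Summable fun k => lam k ^ α * ‖c k‖ ^ 2

/-- Membership in `Ḣ^α_⋄` (real-valued field with finite `Ḣ^α`-norm). -/
def MemH (α : ℝ) (c : Coef) : Prop := IsReal c ∧ FinH α c

/-- Membership in `Ḣ^∞_⋄ = C^∞(Ω)² ∩ Ḣ_⋄`: all Sobolev norms are finite. -/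
def MemHinf (c : Coef) : Prop := ∀ α : ℝ, MemH α c

/-- Real `Ḣ^α` inner product `⟨·,·⟩_{Ḣ^α}` (for real-valued fields). -/
def hInner (α : ℝ) (c d : Coef) : ℝ := ∑' k, lam k ^ α * (c k * (starRingEnd ℂ) (d k)).re

/-- The `L²` inner product. -/
def innerC (c d : Coef) : ℂ := ∑' k, c k * (starRingEnd ℂ) (d k)

/-- The unit vector `(k₂, −k₁)/|k|` spanning the divergence-free direction at
frequency `k`. -/
def evec (k : Freq) : ℝ × ℝ :=
  ((k.1.2 : ℝ) / Real.sqrt (knormSq k), -((k.1.1 : ℝ)) / Real.sqrt (knormSq k))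

/-- Euclidean dot product on `ℝ²`. -/
def dotR (a b : ℝ × ℝ) : ℝ := a.1 * b.1 + a.2 * b.2

/-- A frequency as a real vector. -/
def fvec (k : Freq) : ℝ × ℝ := ((k.1.1 : ℝ), (k.1.2 : ℝ))

/-- Fourier coefficients (along the basis `e_k`) of the Leray-projected
transport nonlinearity `B[u,v] = P[(u·∇)v]`:
`(B[u,v])^(k) · ē_k = 2πi Σ_{m+n=k, n≠0} c_m d_n (e_m·n)(e_n·e_k)`. -/
def Bc (c d : Coef) : Coef := fun k =>
  (((2 * Real.pi : ℝ) : ℂ) * Complex.I) *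
    ∑' m : Freq,
      if h : k.1 - m.1 ≠ 0 then
        c m * d ⟨k.1 - m.1, h⟩ *
          (((dotR (evec m) (fvec ⟨k.1 - m.1, h⟩) *
            dotR (evec ⟨k.1 - m.1, h⟩) (evec k) : ℝ)) : ℂ)
      else 0

/-- The Laplacian `Δ` acting on the scale: `(Δu)^(k) = −λ_k û(k)`. -/
def lapC (c : Coef) : Coef := fun k => -((lam k : ℝ) : ℂ) * c k

/-- Continuity of a trajectory `t ↦ u(t)`, `t ∈ [0,T]`, for the `Ḣ^α`-norm:
`u ∈ C([0,T], Ḣ^α_⋄)`. -/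
def ContH (α : ℝ) (T : ℝ) (u : ℝ → Coef) : Prop :=
  ∀ t ∈ Icc (0:ℝ) T, ∀ ε > 0, ∃ δ > 0, ∀ s ∈ Icc (0:ℝ) T,
    |s - t| < δ → hN α (u s - u t) < ε

/-- Membership `u ∈ L²([0,T], Ḣ^α_⋄)`. -/
def MemL2H (α : ℝ) (T : ℝ) (u : ℝ → Coef) : Prop :=
  (∀ t ∈ Ioc (0:ℝ) T, MemH α (u t)) ∧
    IntegrableOn (fun t => hSq α (u t)) (Ioc 0 T)

/-- `u` is a strong solution on `[0,T]` of the (Leray-projected) periodic 2D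
Navier–Stokes equations `du/dt + νAu + B[u,u] = f`, `u(0) = θ`, posed in `Ḣ_⋄`:
the Fourier coefficients satisfy the corresponding system of ODEs on `(0,T]`,
the trajectory is continuous into `Ḣ¹_⋄` (in particular at `t = 0`), and lies
in `L²([0,T], Ḣ²_⋄)`. -/
structure IsNSSol (ν : ℝ) (f : Coef) (T : ℝ) (θ : Coef) (u : ℝ → Coef) : Prop where
  init : u 0 = θ
  real : ∀ t ∈ Icc (0:ℝ) T, IsReal (u t)
  deriv : ∀ (k : Freq), ∀ t ∈ Ioc (0:ℝ) T,
    HasDerivAt (fun s => u s k)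
      (f k - ((ν * lam k : ℝ) : ℂ) * u t k - Bc (u t) (u t) k) t
  contH1 : ContH 1 T u
  memL2H2 : MemL2H 2 T u

/-- `U` solves the linear parabolic equation
`dU/dt − νΔU + B[u₀, U] + B[U, u₁] = g`, `U(0) = ξ`, on `[0,T]`. -/
structure IsLinPSol (ν : ℝ) (u₀ u₁ : ℝ → Coef) (g : ℝ → Coef) (T : ℝ) (ξ : Coef)
    (U : ℝ → Coef) : Prop where
  init : U 0 = ξ
  real : ∀ t ∈ Icc (0:ℝ) T, IsReal (U t)
  deriv : ∀ (k : Freq), ∀ t ∈ Ioc (0:ℝ) T,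
    HasDerivAt (fun s => U s k)
      (g t k - ((ν * lam k : ℝ) : ℂ) * U t k - Bc (u₀ t) (U t) k - Bc (U t) (u₁ t) k) t

/-- `U = 𝕀_θ[ξ]` solves the linearisation of Navier–Stokes along the
trajectory `u₀`: `dU/dt − νΔU + B[u₀,U] + B[U,u₀] = 0`, `U(0) = ξ`. -/
def IsLinSol (ν : ℝ) (u₀ : ℝ → Coef) (T : ℝ) (ξ : Coef) (U : ℝ → Coef) : Prop :=
  IsLinPSol ν u₀ u₀ (fun _ => 0) T ξ U

/-- The heat semigroup `S_t = e^{νtΔ}` on the scale `Ḣ^α_⋄`. -/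
def heatS (ν t : ℝ) (c : Coef) : Coef := fun k =>
  ((Real.exp (-(ν * lam k * t)) : ℝ) : ℂ) * c k

/-- Duhamel representation of the solution of the periodic heat equation
`du/dt − νΔu = g`, `u(0) = h`. -/
def heatSol (ν : ℝ) (g : ℝ → Coef) (h : Coef) : ℝ → Coef := fun t k =>
  ((Real.exp (-(ν * lam k * t)) : ℝ) : ℂ) *
    (h k + ∫ s in (0:ℝ)..t, ((Real.exp (ν * lam k * s) : ℝ) : ℂ) * g s k)

/-- Real-linearity of a map on the coefficient space. -/
def IsLinMap (Λ : Coef → Coef) : Prop :=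
  (∀ c d, Λ (c + d) = Λ c + Λ d) ∧ ∀ (r : ℝ) (c : Coef), Λ (r • c) = r • Λ c

/-- `Λ` defines a compact (linear) operator `Ḣ^α_⋄ → Ḣ^β_⋄`: it is linear,
maps `Ḣ^α_⋄` into `Ḣ^β_⋄`, and the image of the `Ḣ^α`-unit ball is totally
bounded for the `Ḣ^β`-norm. -/
def IsCompactOp (α β : ℝ) (Λ : Coef → Coef) : Prop :=
  IsLinMap Λ ∧ (∀ c, MemH α c → MemH β (Λ c)) ∧
    ∀ ε > 0, ∃ S : Finset Coef, ∀ c, MemH α c → hN α c ≤ 1 →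
      ∃ s ∈ S, hN β (Λ c - s) < ε

/-- The index `a* = |a|+1` if `|a| ≤ 1`, `a* = |a|` if `|a| ≥ 2`. -/
def astar (a : ℤ) : ℤ := if |a| ≤ 1 then |a| + 1 else |a|

/-- `i`-th component of the unit vector `evec k`. -/
def evecC (i : Fin 2) (k : Freq) : ℝ := if i = 0 then (evec k).1 else (evec k).2

/-- Fourier coefficients (over all of `ℤ²`) of the scalar component `u_i` of a
divergence-free field with coefficients `c`. -/
def compCoef (i : Fin 2) (c : Coef) : ℤ × ℤ → ℂ := fun n =>
  if h : n ≠ 0 then c ⟨n, h⟩ * ((evecC i ⟨n, h⟩ : ℝ) : ℂ) else 0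

/-- Convolution: Fourier coefficients of a pointwise product of two scalar
functions. -/
def convC (F G : ℤ × ℤ → ℂ) : ℤ × ℤ → ℂ := fun n => ∑' m : ℤ × ℤ, F m * G (n - m)

/-- Squared homogeneous Sobolev norm of a scalar function given by its Fourier
coefficients over `ℤ²`. -/
def hSqScalar (α : ℝ) (F : ℤ × ℤ → ℂ) : ℝ := ∑' k : Freq, lam k ^ α * ‖F k.1‖ ^ 2

/-- `‖u vᵀ‖²_{Ḣ^α} = Σ_{i,j=1}^2 ‖u_i v_j‖²_{Ḣ^α}`. -/
def hSqMat (α : ℝ) (c d : Coef) : ℝ :=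
  ∑ i : Fin 2, ∑ j : Fin 2, hSqScalar α (convC (compCoef i c) (compCoef j d))

/-- The character `exp(2πi k·x)`. -/
def efun (k : Freq) (x : ℝ × ℝ) : ℂ :=
  Complex.exp ((((2 * Real.pi : ℝ)) : ℂ) * Complex.I *
    ((k.1.1 : ℂ) * (x.1 : ℂ) + (k.1.2 : ℂ) * (x.2 : ℂ)))

/-- Pointwise evaluation of the `i`-th component of the field. -/
def evalComp (i : Fin 2) (c : Coef) (x : ℝ × ℝ) : ℂ :=
  ∑' k, c k * ((evecC i k : ℝ) : ℂ) * efun k x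

/-- Supremum norm (`C⁰`-norm) of the field. -/
def c0N (c : Coef) : ℝ := ⨆ x : ℝ × ℝ, max ‖evalComp 0 c x‖ ‖evalComp 1 c x‖

/-- The partial derivative `∂_j` acting on divergence-free fields. -/
def pderiv (j : Fin 2) (c : Coef) : Coef := fun k =>
  (((2 * Real.pi : ℝ) : ℂ) * Complex.I) *
    (if j = 0 then ((k.1.1 : ℤ) : ℂ) else ((k.1.2 : ℤ) : ℂ)) * c k

/-- `C¹`-norm of the field. -/
def c1N (c : Coef) : ℝ := c0N c + c0N (pderiv 0 c) + c0N (pderiv 1 c)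

/-- Norm of the multiplier space `B^ℓ`: `C^ℓ(Ω)²` for `ℓ ≤ 1` and `Ḣ^ℓ` for
`ℓ ≥ 2`. -/
def bN (ℓ : ℕ) (c : Coef) : ℝ :=
  if ℓ = 0 then c0N c else if ℓ = 1 then c1N c else hN (ℓ : ℝ) c

end NS2D

namespace NS2D

section

open Filter Topology

theorem IsNSSol.at_zero {ν : ℝ} {f : Coef} {T : ℝ} {θ : Coef} {u : ℝ → Coef}
    (h : IsNSSol ν f T θ u) : u 0 = θ := by
  cases h; assumption

theorem IsLinSol.at_zero {ν : ℝ} {v : ℝ → Coef} {T : ℝ} {ξ : Coef} {U : ℝ → Coef}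
    (h : IsLinSol ν v T ξ U) : U 0 = ξ := by
  cases h; assumption

instance : Countable Freq := by unfold Freq; infer_instance

theorem knormSq_ge_one (k : Freq) : 1 ≤ knormSq k := by
  have h : k.1 ≠ 0 := k.2
  have h2 : (1 : ℤ) ≤ k.1.1 ^ 2 + k.1.2 ^ 2 := by
    by_contra hcon
    have h3 : k.1.1 ^ 2 + k.1.2 ^ 2 ≤ 0 := by omega
    have h4 : k.1.1 = 0 := by nlinarith [sq_nonneg k.1.1, sq_nonneg k.1.2]
    have h5 : k.1.2 = 0 := by nlinarith [sq_nonneg k.1.1, sq_nonneg k.1.2]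
    exact h (Prod.ext h4 h5)
  unfold knormSq
  exact_mod_cast h2

theorem lam_ge (k : Freq) : 4 * knormSq k ≤ lam k := by
  unfold lam
  have := knormSq_ge_one k
  have hp : 3 < Real.pi := Real.pi_gt_three
  have hp2 : 1 ≤ Real.pi ^ 2 := by nlinarith
  nlinarith [mul_nonneg (sub_nonneg.mpr hp2) (zero_le_one.trans this)]

theorem one_le_lam (k : Freq) : 1 ≤ lam k := by
  have := knormSq_ge_one k
  have := lam_ge k
  linarith

theorem lam_pos (k : Freq) : 0 < lam k := lt_of_lt_of_le one_pos (one_le_lam k)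

theorem lamr_pos (α : ℝ) (k : Freq) : 0 < lam k ^ α := Real.rpow_pos_of_pos (lam_pos k) α

theorem hterm_nonneg (α : ℝ) (c : Coef) (k : Freq) : 0 ≤ lam k ^ α * ‖c k‖ ^ 2 :=
  mul_nonneg (lamr_pos α k).le (sq_nonneg _)

theorem hSq_nonneg (α : ℝ) (c : Coef) : 0 ≤ hSq α c := tsum_nonneg (hterm_nonneg α c)

theorem hN_nonneg (α : ℝ) (c : Coef) : 0 ≤ hN α c := Real.sqrt_nonneg _

theorem hN_sq (α : ℝ) (c : Coef) : hN α c ^ 2 = hSq α c := Real.sq_sqrt (hSq_nonneg α c)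

theorem sum_le_hN {α : ℝ} {c : Coef} (h : FinH α c) (S : Finset Freq) :
    ∑ k ∈ S, lam k ^ α * ‖c k‖ ^ 2 ≤ hN α c ^ 2 := by
  rw [hN_sq]
  exact h.sum_le_tsum S (fun k _ => hterm_nonneg α c k)

theorem finH_of_sum_le {α : ℝ} {c : Coef} {M : ℝ} (hM : 0 ≤ M)
    (h : ∀ S : Finset Freq, ∑ k ∈ S, lam k ^ α * ‖c k‖ ^ 2 ≤ M ^ 2) :
    FinH α c ∧ hN α c ≤ M := by
  have h1 : FinH α c := summable_of_sum_le (fun k => hterm_nonneg α c k) h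
  refine ⟨h1, ?_⟩
  have h2 : hSq α c ≤ M ^ 2 := h1.tsum_le_of_sum_le h
  exact Real.sqrt_le_iff.mpr ⟨hM, h2⟩

theorem finH_add_aux {α : ℝ} {c d : Coef} (hc : FinH α c) (hd : FinH α d) :
    FinH α (c + d) ∧ hN α (c + d) ≤ hN α c + hN α d := by
  apply finH_of_sum_le (add_nonneg (hN_nonneg _ _) (hN_nonneg _ _))
  intro S
  have h1 := sum_le_hN hc S
  have h2 := sum_le_hN hd S
  have h3 := Finset.sum_mul_sq_le_sq_mul_sq S (fun k => Real.sqrt (lam k ^ α) * ‖c k‖)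
    (fun k => Real.sqrt (lam k ^ α) * ‖d k‖)
  have e1 : ∀ (c : Coef) k, (Real.sqrt (lam k ^ α) * ‖c k‖) ^ 2 = lam k ^ α * ‖c k‖ ^ 2 := by
    intro c k
    rw [mul_pow, Real.sq_sqrt (lamr_pos α k).le]
  have e2 : ∀ k, (Real.sqrt (lam k ^ α) * ‖c k‖) * (Real.sqrt (lam k ^ α) * ‖d k‖)
      = lam k ^ α * (‖c k‖ * ‖d k‖) := by
    intro k
    have := Real.mul_self_sqrt (lamr_pos α k).le
    linear_combination (‖c k‖ * ‖d k‖) * this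
  simp only [e1, e2] at h3
  have h4 : ∑ k ∈ S, lam k ^ α * (‖c k‖ * ‖d k‖) ≤ hN α c * hN α d := by
    apply abs_le_of_sq_le_sq' _ (mul_nonneg (hN_nonneg _ _) (hN_nonneg _ _)) |>.2
    refine h3.trans ?_
    rw [mul_pow]
    exact mul_le_mul h1 h2 (Finset.sum_nonneg fun k _ => hterm_nonneg α d k) (sq_nonneg _)
  have h5 : ∑ k ∈ S, lam k ^ α * ‖(c + d) k‖ ^ 2 ≤ ∑ k ∈ S, (lam k ^ α * ‖c k‖ ^ 2 +
      2 * (lam k ^ α * (‖c k‖ * ‖d k‖)) + lam k ^ α * ‖d k‖ ^ 2) := by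
    apply Finset.sum_le_sum
    intro k _
    have : ‖(c + d) k‖ ≤ ‖c k‖ + ‖d k‖ := norm_add_le _ _
    have h6 : ‖(c + d) k‖ ^ 2 ≤ (‖c k‖ + ‖d k‖) ^ 2 := pow_le_pow_left₀ (norm_nonneg _) this 2
    have := mul_le_mul_of_nonneg_left h6 (lamr_pos α k).le
    linarith
  rw [Finset.sum_add_distrib, Finset.sum_add_distrib, ← Finset.mul_sum] at h5
  nlinarith

theorem FinH.add {α : ℝ} {c d : Coef} (hc : FinH α c) (hd : FinH α d) : FinH α (c + d) :=
  (finH_add_aux hc hd).1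

theorem hN_add_le {α : ℝ} {c d : Coef} (hc : FinH α c) (hd : FinH α d) :
    hN α (c + d) ≤ hN α c + hN α d := (finH_add_aux hc hd).2

theorem hSq_smul (α r : ℝ) (c : Coef) : hSq α (r • c) = r ^ 2 * hSq α c := by
  unfold hSq
  rw [← tsum_mul_left]
  congr 1; ext k
  simp only [Pi.smul_apply, norm_smul, Real.norm_eq_abs, mul_pow, sq_abs]
  ring

theorem hN_smul (α r : ℝ) (c : Coef) : hN α (r • c) = |r| * hN α c := by
  unfold hN
  rw [hSq_smul, Real.sqrt_mul (sq_nonneg r), Real.sqrt_sq_eq_abs]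

theorem FinH.smul {α : ℝ} {c : Coef} (hc : FinH α c) (r : ℝ) : FinH α (r • c) := by
  unfold FinH
  have := Summable.mul_left (r ^ 2) hc
  refine this.congr fun k => ?_
  simp only [Pi.smul_apply, norm_smul, Real.norm_eq_abs, mul_pow, sq_abs]
  ring

theorem FinH.neg {α : ℝ} {c : Coef} (hc : FinH α c) : FinH α (-c) := by
  have := hc.smul (-1)
  simpa using this

theorem hN_neg (α : ℝ) (c : Coef) : hN α (-c) = hN α c := by
  have := hN_smul α (-1) c
  simpa using this

theorem FinH.sub {α : ℝ} {c d : Coef} (hc : FinH α c) (hd : FinH α d) : FinH α (c - d) := by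
  rw [sub_eq_add_neg]; exact hc.add hd.neg

theorem hN_sub_le {α : ℝ} {c d : Coef} (hc : FinH α c) (hd : FinH α d) :
    hN α (c - d) ≤ hN α c + hN α d := by
  rw [sub_eq_add_neg, ← hN_neg α d]; exact hN_add_le hc hd.neg

theorem hN_sub_rev (α : ℝ) (c d : Coef) : hN α (c - d) = hN α (d - c) := by
  rw [← hN_neg, neg_sub]

theorem hN_abs_sub_le {α : ℝ} {c d : Coef} (hc : FinH α c) (hd : FinH α d) :
    |hN α c - hN α d| ≤ hN α (c - d) := by
  rw [abs_le]
  have h1 := hN_add_le (hc.sub hd) hd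
  have h2 := hN_add_le (hd.sub hc) hc
  rw [sub_add_cancel] at h1 h2
  rw [hN_sub_rev] at h2
  constructor <;> linarith

theorem hN_zero (α : ℝ) : hN α 0 = 0 := by
  have := hN_smul α 0 0
  simpa using this

theorem finH_zero (α : ℝ) : FinH α 0 := by
  unfold FinH; simp [summable_zero]

theorem norm_sq_sum_le {c : Coef} (h : FinH 0 c) (S : Finset Freq) :
    ∑ k ∈ S, ‖c k‖ ^ 2 ≤ hN 0 c ^ 2 := by
  have := sum_le_hN h S
  simpa using this

theorem norm_le_hN0 {c : Coef} (h : FinH 0 c) (k : Freq) : ‖c k‖ ≤ hN 0 c := by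
  have := norm_sq_sum_le h {k}
  rw [Finset.sum_singleton] at this
  exact abs_le_of_sq_le_sq' this (hN_nonneg _ _) |>.2

theorem FinH.zero_of_one {c : Coef} (h : FinH 1 c) : FinH 0 c ∧ hN 0 c ≤ hN 1 c := by
  apply finH_of_sum_le (hN_nonneg _ _)
  intro S
  refine le_trans ?_ (sum_le_hN h S)
  apply Finset.sum_le_sum
  intro k _
  rw [Real.rpow_zero, Real.rpow_one]
  exact mul_le_mul_of_nonneg_right (one_le_lam k) (sq_nonneg _)

theorem FinH.one_of_two {c : Coef} (h : FinH 2 c) : FinH 1 c := by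
  refine (finH_of_sum_le (hN_nonneg 2 c) ?_).1
  intro S
  refine le_trans ?_ (sum_le_hN h S)
  apply Finset.sum_le_sum
  intro k _
  exact mul_le_mul_of_nonneg_right
    (Real.rpow_le_rpow_of_exponent_le (one_le_lam k) (by norm_num)) (sq_nonneg _)

theorem IsReal.add {c d : Coef} (hc : IsReal c) (hd : IsReal d) : IsReal (c + d) := by
  intro k
  simp only [Pi.add_apply, hc k, hd k, map_add]; ring

theorem IsReal.smul {c : Coef} (hc : IsReal c) (r : ℝ) : IsReal (r • c) := by
  intro k
  simp only [Pi.smul_apply, hc k, Complex.real_smul, map_mul, Complex.conj_ofReal]; ring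

theorem IsReal.sub {c d : Coef} (hc : IsReal c) (hd : IsReal d) : IsReal (c - d) := by
  intro k
  simp only [Pi.sub_apply, hc k, hd k, map_sub]; ring

/-- Fatou in `L²`. -/
theorem fatou {c : ℕ → Coef} {d : Coef} {M : ℝ} (hM : 0 ≤ M)
    (hc : ∀ n, FinH 0 (c n)) (hb : ∀ᶠ n in atTop, hN 0 (c n) ≤ M)
    (hl : ∀ k, Tendsto (fun n => c n k) atTop (𝓝 (d k))) : FinH 0 d ∧ hN 0 d ≤ M := by
  apply finH_of_sum_le hM
  intro S
  simp only [Real.rpow_zero, one_mul]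
  have h1 : Tendsto (fun n => ∑ k ∈ S, ‖c n k‖ ^ 2) atTop (𝓝 (∑ k ∈ S, ‖d k‖ ^ 2)) :=
    tendsto_finsetSum S fun k _ => ((hl k).norm.pow 2)
  refine le_of_tendsto h1 ?_
  filter_upwards [hb] with n hn
  exact (norm_sq_sum_le (hc n) S).trans (pow_le_pow_left₀ (hN_nonneg _ _) hn 2)

theorem MemH.add {α : ℝ} {c d : Coef} (hc : MemH α c) (hd : MemH α d) : MemH α (c + d) :=
  ⟨hc.1.add hd.1, hc.2.add hd.2⟩
theorem MemH.sub {α : ℝ} {c d : Coef} (hc : MemH α c) (hd : MemH α d) : MemH α (c - d) :=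
  ⟨hc.1.sub hd.1, hc.2.sub hd.2⟩
theorem MemH.smul {α : ℝ} {c : Coef} (hc : MemH α c) (r : ℝ) : MemH α (r • c) :=
  ⟨hc.1.smul r, hc.2.smul r⟩

end

section

open Filter Topology

theorem sum_inv_sq_nat (R : ℝ) (hR : 1 ≤ R) (N : ℕ) :
    ∑ n ∈ Finset.range N, 1 / (R + n) ^ 2 ≤ 1 / (R - 1 / 2) - 1 / (R + N - 1 / 2) := by
  induction N with
  | zero => simp
  | succ N ih =>
    rw [Finset.sum_range_succ]
    have hN : (0 : ℝ) ≤ N := Nat.cast_nonneg N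
    have h1 : 0 < R + N - 1 / 2 := by linarith
    have h2 : 0 < R + N + 1 / 2 := by linarith
    have h3 : 0 < R + N := by linarith
    have key : 1 / (R + N) ^ 2 ≤ 1 / (R + N - 1 / 2) - 1 / (R + N + 1 / 2) := by
      rw [div_sub_div _ _ h1.ne' h2.ne', div_le_div_iff₀ (by positivity) (by positivity)]
      nlinarith
    have e : R + ((N + 1 : ℕ) : ℝ) - 1 / 2 = R + N + 1 / 2 := by push_cast; ring
    rw [e]
    linarith

theorem sum_inv_sq_nat' (R : ℝ) (hR : 1 ≤ R) (S : Finset ℕ) :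
    ∑ n ∈ S, 1 / (R + n) ^ 2 ≤ 2 / R := by
  obtain ⟨N, hN⟩ := S.exists_nat_subset_range
  have h1 : ∑ n ∈ S, 1 / (R + n) ^ 2 ≤ ∑ n ∈ Finset.range N, 1 / (R + n) ^ 2 :=
    Finset.sum_le_sum_of_subset_of_nonneg hN (fun _ _ _ => by positivity)
  have h2 := sum_inv_sq_nat R hR N
  have h3 : 0 < R + N - 1 / 2 := by
    have : (0 : ℝ) ≤ N := Nat.cast_nonneg N
    linarith
  have h4 : 0 ≤ 1 / (R + N - 1 / 2) := by positivity
  have h5 : 1 / (R - 1 / 2) ≤ 2 / R := by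
    rw [div_le_div_iff₀ (by linarith) (by linarith)]
    linarith
  linarith

theorem sum_inv_sq_int (R : ℝ) (hR : 1 ≤ R) (J : Finset ℤ) :
    ∑ p ∈ J, 1 / (R + |(p : ℝ)|) ^ 2 ≤ 4 / R := by
  classical
  have key : ∀ (P : ℤ → Prop) [DecidablePred P],
      (∀ x y, P x → P y → x.natAbs = y.natAbs → x = y) →
      ∑ p ∈ J.filter P, 1 / (R + |(p : ℝ)|) ^ 2 ≤ 2 / R := by
    intro P _ hP
    have : ∑ p ∈ J.filter P, 1 / (R + |(p : ℝ)|) ^ 2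
        = ∑ n ∈ (J.filter P).image Int.natAbs, 1 / (R + (n : ℝ)) ^ 2 := by
      rw [Finset.sum_image]
      · apply Finset.sum_congr rfl
        intro p _
        rw [Nat.cast_natAbs, Int.cast_abs]
      · intro x hx y hy hxy
        simp only [Finset.coe_filter, Set.mem_ofPred_eq] at hx hy
        exact hP x y hx.2 hy.2 hxy
    rw [this]
    exact sum_inv_sq_nat' R hR _
  have h1 := key (fun p => 0 ≤ p) (fun x y hx hy h => by omega)
  have h2 := key (fun p => ¬ (0 ≤ p)) (fun x y hx hy h => by omega)
  rw [← Finset.sum_filter_add_sum_filter_not J (fun p => 0 ≤ p)]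
  have : 4 / R = 2 / R + 2 / R := by ring
  linarith

theorem carlson (J : Finset ℤ) (A : ℤ → ℝ) (S0 S1 : ℝ) (h0 : 0 ≤ S0) (h01 : S0 ≤ S1)
    (hS0 : ∑ p ∈ J, A p ^ 2 ≤ S0 ^ 2) (hS1 : ∑ p ∈ J, (p : ℝ) ^ 2 * A p ^ 2 ≤ S1 ^ 2) :
    ∑ p ∈ J, A p ≤ 4 * Real.sqrt (S0 * S1) := by
  rcases h0.eq_or_lt with h | h
  · have hz : ∀ p ∈ J, A p = 0 := by
      intro p hp
      have h1 := Finset.single_le_sum (f := fun p => A p ^ 2) (fun p _ => sq_nonneg _) hp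
      have h2 : A p ^ 2 ≤ 0 := by
        have := h1.trans hS0
        rw [← h] at this; simpa using this
      exact pow_eq_zero_iff (two_ne_zero) |>.mp (le_antisymm h2 (sq_nonneg _))
    rw [Finset.sum_eq_zero hz]
    positivity
  · set R := S1 / S0 with hRdef
    have hR : 1 ≤ R := by rw [hRdef, le_div_iff₀ h]; linarith
    have hRS : R * S0 = S1 := by rw [hRdef]; field_simp
    have hS1p : 0 < S1 := by linarith
    have cs := Finset.sum_mul_sq_le_sq_mul_sq J (fun p => 1 / (R + |(p : ℝ)|))
      (fun p => (R + |(p : ℝ)|) * A p)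
    have e1 : ∀ p : ℤ, 1 / (R + |(p : ℝ)|) * ((R + |(p : ℝ)|) * A p) = A p := by
      intro p
      have : 0 < R + |(p : ℝ)| := by positivity
      field_simp
    simp only [e1] at cs
    simp only [one_div, inv_pow] at cs
    have h1 := sum_inv_sq_int R hR J
    simp only [one_div] at h1
    have h2 : ∑ p ∈ J, ((R + |(p : ℝ)|) * A p) ^ 2 ≤ 4 * S1 ^ 2 := by
      have : ∑ p ∈ J, ((R + |(p : ℝ)|) * A p) ^ 2 ≤
          ∑ p ∈ J, (2 * R ^ 2 * A p ^ 2 + 2 * ((p : ℝ) ^ 2 * A p ^ 2)) := by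
        apply Finset.sum_le_sum
        intro p _
        have h3 : (R + |(p : ℝ)|) ^ 2 ≤ 2 * R ^ 2 + 2 * (p : ℝ) ^ 2 := by
          nlinarith [sq_nonneg (R - |(p : ℝ)|), sq_abs (p : ℝ)]
        have := mul_le_mul_of_nonneg_right h3 (sq_nonneg (A p))
        rw [mul_pow]; linarith
      rw [Finset.sum_add_distrib, ← Finset.mul_sum, ← Finset.mul_sum] at this
      have h4 : 2 * R ^ 2 * ∑ p ∈ J, A p ^ 2 ≤ 2 * R ^ 2 * S0 ^ 2 :=
        mul_le_mul_of_nonneg_left hS0 (by positivity)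
      have h5 : R ^ 2 * S0 ^ 2 = S1 ^ 2 := by rw [← hRS]; ring
      linarith
    have h3 : (∑ p ∈ J, A p) ^ 2 ≤ 4 / R * (4 * S1 ^ 2) :=
      cs.trans (mul_le_mul h1 h2 (Finset.sum_nonneg fun _ _ => sq_nonneg _) (by positivity))
    have h4 : 4 / R * (4 * S1 ^ 2) = (4 * Real.sqrt (S0 * S1)) ^ 2 := by
      rw [mul_pow, Real.sq_sqrt (by positivity), hRdef]
      field_simp
    rw [h4] at h3
    exact (abs_le_of_sq_le_sq' h3 (by positivity)).2

/-- Summation box. -/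
theorem lady_box (J : Finset ℤ) (a b c : ℤ × ℤ → ℝ) (A0 A1 B0 B1 C : ℝ)
    (hA0 : 0 ≤ A0) (hA : A0 ≤ A1) (hB0 : 0 ≤ B0) (hB : B0 ≤ B1) (hC : 0 ≤ C)
    (ha0 : ∀ S : Finset (ℤ × ℤ), ∑ x ∈ S, a x ^ 2 ≤ A0 ^ 2)
    (ha1 : ∀ S : Finset (ℤ × ℤ), ∑ x ∈ S, ((x.1 : ℝ) ^ 2 + (x.2 : ℝ) ^ 2) * a x ^ 2 ≤ A1 ^ 2)
    (hb0 : ∀ S : Finset (ℤ × ℤ), ∑ x ∈ S, b x ^ 2 ≤ B0 ^ 2)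
    (hb1 : ∀ S : Finset (ℤ × ℤ), ∑ x ∈ S, ((x.1 : ℝ) ^ 2 + (x.2 : ℝ) ^ 2) * b x ^ 2 ≤ B1 ^ 2)
    (hc : ∀ S : Finset (ℤ × ℤ), ∑ x ∈ S, c x ^ 2 ≤ C ^ 2) :
    ∑ p ∈ J, ∑ q ∈ J, ∑ m ∈ J, ∑ n ∈ J, a (m, p) * b (q, n) * c (m + q, p + n)
      ≤ 16 * Real.sqrt (A0 * A1) * Real.sqrt (B0 * B1) * C := by
  classical
  set A : ℤ → ℝ := fun p => Real.sqrt (∑ m ∈ J, a (m, p) ^ 2) with hAdef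
  set B : ℤ → ℝ := fun q => Real.sqrt (∑ n ∈ J, b (q, n) ^ 2) with hBdef
  have hAn : ∀ p, 0 ≤ A p := fun p => Real.sqrt_nonneg _
  have hBn : ∀ p, 0 ≤ B p := fun p => Real.sqrt_nonneg _
  have hAsq : ∀ p, A p ^ 2 = ∑ m ∈ J, a (m, p) ^ 2 :=
    fun p => Real.sq_sqrt (Finset.sum_nonneg fun _ _ => sq_nonneg _)
  have hBsq : ∀ p, B p ^ 2 = ∑ m ∈ J, b (p, m) ^ 2 :=
    fun p => Real.sq_sqrt (Finset.sum_nonneg fun _ _ => sq_nonneg _)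
  have hSA : ∑ p ∈ J, A p ≤ 4 * Real.sqrt (A0 * A1) := by
    apply carlson J A A0 A1 hA0 hA
    · have := ha0 (J ×ˢ J)
      rw [Finset.sum_product_right] at this
      simpa only [hAsq] using this
    · refine le_trans ?_ (ha1 (J ×ˢ J))
      rw [Finset.sum_product_right]
      apply Finset.sum_le_sum
      intro p _
      rw [hAsq, Finset.mul_sum]
      apply Finset.sum_le_sum
      intro m _
      exact mul_le_mul_of_nonneg_right (by nlinarith [sq_nonneg (m : ℝ)]) (sq_nonneg _)
  have hSB : ∑ p ∈ J, B p ≤ 4 * Real.sqrt (B0 * B1) := by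
    apply carlson J B B0 B1 hB0 hB
    · have := hb0 (J ×ˢ J)
      rw [Finset.sum_product] at this
      simpa only [hBsq] using this
    · refine le_trans ?_ (hb1 (J ×ˢ J))
      rw [Finset.sum_product]
      apply Finset.sum_le_sum
      intro p _
      rw [hBsq, Finset.mul_sum]
      apply Finset.sum_le_sum
      intro m _
      exact mul_le_mul_of_nonneg_right (by nlinarith [sq_nonneg (m : ℝ)]) (sq_nonneg _)
  have inner : ∀ p ∈ J, ∀ q ∈ J,
      ∑ m ∈ J, ∑ n ∈ J, a (m, p) * b (q, n) * c (m + q, p + n) ≤ A p * B q * C := by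
    intro p _ q _
    have cs := Finset.sum_mul_sq_le_sq_mul_sq (J ×ˢ J) (fun x => a (x.1, p) * b (q, x.2))
      (fun x => c (x.1 + q, p + x.2))
    rw [Finset.sum_product] at cs
    have h1 : ∑ x ∈ J ×ˢ J, (a (x.1, p) * b (q, x.2)) ^ 2 = A p ^ 2 * B q ^ 2 := by
      rw [hAsq, hBsq, Finset.sum_product, Finset.sum_mul_sum]
      simp only [mul_pow]
    have h2 : ∑ x ∈ J ×ˢ J, c (x.1 + q, p + x.2) ^ 2 ≤ C ^ 2 := by
      have := hc ((J ×ˢ J).image (fun x => (x.1 + q, p + x.2)))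
      rw [Finset.sum_image] at this
      · exact this
      · intro x _ y _ hxy
        simp only [Prod.mk.injEq] at hxy
        exact Prod.ext (by omega) (by omega)
    rw [h1] at cs
    have h3 : (∑ m ∈ J, ∑ n ∈ J, a (m, p) * b (q, n) * c (m + q, p + n)) ^ 2
        ≤ (A p * B q * C) ^ 2 := by
      refine cs.trans ?_
      rw [mul_pow, mul_pow]
      exact mul_le_mul_of_nonneg_left h2 (by positivity)
    exact (abs_le_of_sq_le_sq' h3 (mul_nonneg (mul_nonneg (hAn p) (hBn q)) hC)).2
  calc _ ≤ ∑ p ∈ J, ∑ q ∈ J, A p * B q * C :=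
        Finset.sum_le_sum fun p hp => Finset.sum_le_sum fun q hq => inner p hp q hq
    _ = (∑ p ∈ J, A p) * (∑ q ∈ J, B q) * C := by
        rw [Finset.sum_mul_sum, Finset.sum_mul]
        simp only [Finset.sum_mul]
    _ ≤ (4 * Real.sqrt (A0 * A1)) * (4 * Real.sqrt (B0 * B1)) * C := by
        apply mul_le_mul_of_nonneg_right _ hC
        exact mul_le_mul hSA hSB (Finset.sum_nonneg fun q _ => hBn q) (by positivity)
    _ = _ := by ring

theorem lady (a b c : ℤ × ℤ → ℝ) (A0 A1 B0 B1 C : ℝ)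
    (han : ∀ x, 0 ≤ a x) (hbn : ∀ x, 0 ≤ b x) (hcn : ∀ x, 0 ≤ c x)
    (hA0 : 0 ≤ A0) (hA : A0 ≤ A1) (hB0 : 0 ≤ B0) (hB : B0 ≤ B1) (hC : 0 ≤ C)
    (ha0 : ∀ S : Finset (ℤ × ℤ), ∑ x ∈ S, a x ^ 2 ≤ A0 ^ 2)
    (ha1 : ∀ S : Finset (ℤ × ℤ), ∑ x ∈ S, ((x.1 : ℝ) ^ 2 + (x.2 : ℝ) ^ 2) * a x ^ 2 ≤ A1 ^ 2)
    (hb0 : ∀ S : Finset (ℤ × ℤ), ∑ x ∈ S, b x ^ 2 ≤ B0 ^ 2)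
    (hb1 : ∀ S : Finset (ℤ × ℤ), ∑ x ∈ S, ((x.1 : ℝ) ^ 2 + (x.2 : ℝ) ^ 2) * b x ^ 2 ≤ B1 ^ 2)
    (hc : ∀ S : Finset (ℤ × ℤ), ∑ x ∈ S, c x ^ 2 ≤ C ^ 2) :
    ∀ S : Finset ((ℤ × ℤ) × (ℤ × ℤ)), ∑ x ∈ S, a x.1 * b x.2 * c (x.1 + x.2)
      ≤ 16 * Real.sqrt (A0 * A1) * Real.sqrt (B0 * B1) * C := by
  classical
  intro S
  set J : Finset ℤ := S.image (fun x => x.1.1) ∪ S.image (fun x => x.1.2) ∪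
    S.image (fun x => x.2.1) ∪ S.image (fun x => x.2.2) with hJ
  have hsub : S ⊆ (J ×ˢ J) ×ˢ (J ×ˢ J) := by
    intro x hx
    simp only [Finset.mem_product, hJ, Finset.mem_union, Finset.mem_image]
    refine ⟨⟨?_, ?_⟩, ?_, ?_⟩
    · exact Or.inl (Or.inl (Or.inl ⟨x, hx, rfl⟩))
    · exact Or.inl (Or.inl (Or.inr ⟨x, hx, rfl⟩))
    · exact Or.inl (Or.inr ⟨x, hx, rfl⟩)
    · exact Or.inr ⟨x, hx, rfl⟩
  have h1 := Finset.sum_le_sum_of_subset_of_nonneg hsub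
    (f := fun x => a x.1 * b x.2 * c (x.1 + x.2))
    (fun x _ _ => mul_nonneg (mul_nonneg (han _) (hbn _)) (hcn _))
  refine h1.trans (le_trans (le_of_eq ?_)
    (lady_box J a b c A0 A1 B0 B1 C hA0 hA hB0 hB hC ha0 ha1 hb0 hb1 hc))
  rw [Finset.sum_product]
  simp only [Finset.sum_product, Prod.mk_add_mk]
  rw [Finset.sum_comm]
  refine Finset.sum_congr rfl fun p _ => ?_
  rw [Finset.sum_comm]

end

section

open Filter Topology

/-- Extension of the coefficients by zero. -/
def Ez (c : Coef) : ℤ × ℤ → ℂ := fun n => if h : n ≠ 0 then c ⟨n, h⟩ else 0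

def nz (n : ℤ × ℤ) : ℝ := Real.sqrt ((n.1 : ℝ) ^ 2 + (n.2 : ℝ) ^ 2)

def ez (k : ℤ × ℤ) : ℝ × ℝ := ((k.2 : ℝ) / nz k, -((k.1 : ℝ)) / nz k)

def fz (k : ℤ × ℤ) : ℝ × ℝ := ((k.1 : ℝ), (k.2 : ℝ))

def Kz (m n k : ℤ × ℤ) : ℝ := dotR (ez m) (fz n) * dotR (ez n) (ez k)

theorem Ez_freq (c : Coef) (k : Freq) : Ez c k.1 = c k := by
  have h : k.1 ≠ 0 := k.2
  unfold Ez
  rw [dif_pos h]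
  rfl

theorem Ez_zero (c : Coef) : Ez c 0 = 0 := by simp [Ez]

theorem Ez_add (c d : Coef) (n : ℤ × ℤ) : Ez (c + d) n = Ez c n + Ez d n := by
  unfold Ez; split_ifs
  · rfl
  · simp

theorem Ez_smul (r : ℝ) (c : Coef) (n : ℤ × ℤ) : Ez (r • c) n = (r : ℂ) * Ez c n := by
  unfold Ez; split_ifs
  · exact Complex.real_smul
  · simp

theorem Ez_real {c : Coef} (hc : IsReal c) (n : ℤ × ℤ) :
    Ez c (-n) = - (starRingEnd ℂ) (Ez c n) := by
  by_cases h : n = 0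
  · subst h; simp [Ez]
  · have h' : -n ≠ 0 := neg_ne_zero.mpr h
    unfold Ez
    rw [dif_pos h', dif_pos h]
    exact hc ⟨n, h⟩

theorem nz_nonneg (n : ℤ × ℤ) : 0 ≤ nz n := Real.sqrt_nonneg _

theorem nz_sq (n : ℤ × ℤ) : nz n ^ 2 = (n.1 : ℝ) ^ 2 + (n.2 : ℝ) ^ 2 :=
  Real.sq_sqrt (by positivity)

theorem ez_sq_le (k : ℤ × ℤ) : (ez k).1 ^ 2 + (ez k).2 ^ 2 ≤ 1 := by
  unfold ez
  simp only
  rw [div_pow, div_pow, ← add_div, nz_sq, neg_sq, add_comm]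
  exact div_self_le_one _

theorem dotR_le (a b : ℝ × ℝ) (A B : ℝ) (hA : 0 ≤ A) (hB : 0 ≤ B)
    (ha : a.1 ^ 2 + a.2 ^ 2 ≤ A ^ 2) (hb : b.1 ^ 2 + b.2 ^ 2 ≤ B ^ 2) : |dotR a b| ≤ A * B := by
  apply abs_le_of_sq_le_sq _ (mul_nonneg hA hB)
  unfold dotR
  have h1 : (a.1 * b.1 + a.2 * b.2) ^ 2 ≤ (a.1 ^ 2 + a.2 ^ 2) * (b.1 ^ 2 + b.2 ^ 2) := by
    nlinarith [sq_nonneg (a.1 * b.2 - a.2 * b.1)]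
  refine h1.trans ?_
  rw [mul_pow]
  exact mul_le_mul ha hb (by positivity) (by positivity)

theorem dot_ez_fz_le (m n : ℤ × ℤ) : |dotR (ez m) (fz n)| ≤ nz n := by
  have := dotR_le (ez m) (fz n) 1 (nz n) zero_le_one (nz_nonneg n) (by simpa using ez_sq_le m)
    (by rw [nz_sq]; exact le_refl _)
  simpa using this

theorem dot_ez_ez_le (m n : ℤ × ℤ) : |dotR (ez m) (ez n)| ≤ 1 := by
  have := dotR_le (ez m) (ez n) 1 1 zero_le_one zero_le_one (by simpa using ez_sq_le m)
    (by simpa using ez_sq_le n)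
  simpa using this

theorem dot_ez_self (m : ℤ × ℤ) : dotR (ez m) (fz m) = 0 := by
  unfold dotR ez fz; simp only; ring

theorem dot_fz_add (a : ℝ × ℝ) (m n : ℤ × ℤ) :
    dotR a (fz (m + n)) = dotR a (fz m) + dotR a (fz n) := by
  unfold dotR fz; simp only [Prod.fst_add, Prod.snd_add]; push_cast; ring

theorem ez_neg (m : ℤ × ℤ) (b : ℝ × ℝ) : dotR (ez (-m)) b = - dotR (ez m) b := by
  unfold dotR ez nz; simp only [Prod.fst_neg, Prod.snd_neg]; push_cast
  simp only [neg_sq]; ring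

theorem dotR_comm (a b : ℝ × ℝ) : dotR a b = dotR b a := by unfold dotR; ring

theorem Kz_le (m n k : ℤ × ℤ) : |Kz m n k| ≤ nz n := by
  unfold Kz
  rw [abs_mul]
  calc _ ≤ nz n * 1 := mul_le_mul (dot_ez_fz_le m n) (dot_ez_ez_le n k) (abs_nonneg _) (nz_nonneg _)
    _ = _ := mul_one _

theorem Kz_le' (m k : ℤ × ℤ) : |Kz m (k - m) k| ≤ nz k := by
  unfold Kz
  have h : dotR (ez m) (fz (k - m)) = dotR (ez m) (fz k) := by
    have := dot_fz_add (ez m) (k - m) m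
    rw [sub_add_cancel, dot_ez_self, add_zero] at this
    exact this.symm
  rw [abs_mul, h]
  calc _ ≤ nz k * 1 := mul_le_mul (dot_ez_fz_le m k) (dot_ez_ez_le _ k) (abs_nonneg _) (nz_nonneg _)
    _ = _ := mul_one _

theorem Kz_swap (p k : ℤ × ℤ) : Kz p k (k + p) = - Kz (-p) (k + p) k := by
  unfold Kz
  rw [ez_neg, dot_fz_add, dot_ez_self, add_zero, dotR_comm (ez k)]; ring

/-- tsum over frequencies as a tsum over `ℤ²`. -/
theorem freq_inj : Function.Injective (fun k : Freq => (k.1 : ℤ × ℤ)) := by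
  intro a b h; exact Subtype.ext h

theorem supp_freq {M : Type*} [Zero M] (g : ℤ × ℤ → M) (h : g 0 = 0) :
    Function.support g ⊆ Set.range (fun k : Freq => (k.1 : ℤ × ℤ)) := by
  intro x hx
  have : x ≠ 0 := by rintro rfl; exact hx h
  exact ⟨⟨x, this⟩, rfl⟩

theorem tsum_freq {M : Type*} [AddCommMonoid M] [TopologicalSpace M] [T2Space M]
    (g : ℤ × ℤ → M) (h : g 0 = 0) : ∑' k : Freq, g k.1 = ∑' k, g k :=
  freq_inj.tsum_eq (supp_freq g h)

theorem Bc_eq (c d : Coef) (k : Freq) : Bc c d k = (((2 * Real.pi : ℝ) : ℂ) * Complex.I) *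
    ∑' m : ℤ × ℤ, Ez c m * Ez d (k.1 - m) * ((Kz m (k.1 - m) k.1 : ℝ) : ℂ) := by
  unfold Bc
  congr 1
  rw [← tsum_freq (fun m => Ez c m * Ez d (k.1 - m) * ((Kz m (k.1 - m) k.1 : ℝ) : ℂ))
    (by simp [Ez_zero])]
  congr 1; ext m
  rw [Ez_freq]
  by_cases h : k.1 - m.1 ≠ 0
  · rw [dif_pos h]
    have : Ez d (k.1 - m.1) = d ⟨k.1 - m.1, h⟩ := by unfold Ez; rw [dif_pos h]
    rw [this]
    rfl
  · rw [dif_neg h]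
    have : Ez d (k.1 - m.1) = 0 := by unfold Ez; rw [dif_neg h]
    rw [this]; simp

theorem Ez_sum (c : Coef) (w : ℤ × ℤ → ℝ) (S : Finset (ℤ × ℤ)) :
    ∃ S' : Finset Freq, ∑ x ∈ S, w x * ‖Ez c x‖ ^ 2 = ∑ k ∈ S', w k.1 * ‖c k‖ ^ 2 := by
  classical
  refine ⟨Finset.subtype (fun k => k ≠ 0) S, ?_⟩
  have h1 : ∑ k ∈ Finset.subtype (fun k => k ≠ 0) S, w k.1 * ‖Ez c k.1‖ ^ 2
      = ∑ x ∈ S.filter (fun k => k ≠ 0), w x * ‖Ez c x‖ ^ 2 :=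
    Finset.sum_subtype_eq_sum_filter (s := S) (p := fun k => k ≠ 0)
      (fun x => w x * ‖Ez c x‖ ^ 2)
  have h2 : ∑ k ∈ Finset.subtype (fun k => k ≠ 0) S, w k.1 * ‖Ez c k.1‖ ^ 2
      = ∑ k ∈ (Finset.subtype (fun k => k ≠ 0) S : Finset Freq), w k.1 * ‖c k‖ ^ 2 := by
    apply Finset.sum_congr rfl
    intro k _
    rw [Ez_freq c k]
  refine Eq.trans ?_ h2
  rw [h1]
  symm
  apply Finset.sum_subset (Finset.filter_subset _ _)
  intro x hx hx2
  have : x = 0 := by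
    by_contra h
    exact hx2 (Finset.mem_filter.mpr ⟨hx, h⟩)
  rw [this, Ez_zero]; simp

theorem Ez_sum0 {c : Coef} (hc : FinH 0 c) (S : Finset (ℤ × ℤ)) :
    ∑ x ∈ S, ‖Ez c x‖ ^ 2 ≤ hN 0 c ^ 2 := by
  obtain ⟨S', h⟩ := Ez_sum c (fun _ => 1) S
  simp only [one_mul] at h
  rw [h]
  exact norm_sq_sum_le hc S'

theorem Ez_sum1 {c : Coef} (hc : FinH 1 c) (S : Finset (ℤ × ℤ)) :
    ∑ x ∈ S, (2 * Real.pi * nz x * ‖Ez c x‖) ^ 2 ≤ hN 1 c ^ 2 := by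
  obtain ⟨S', h⟩ := Ez_sum c (fun x => (2 * Real.pi * nz x) ^ 2) S
  simp only [mul_pow _ ‖_‖]
  rw [h]
  refine le_trans (le_of_eq ?_) (sum_le_hN hc S')
  apply Finset.sum_congr rfl
  intro k _
  rw [Real.rpow_one, mul_pow, nz_sq]
  unfold lam knormSq; ring

theorem Ez_sum1' {c : Coef} (hc : FinH 1 c) (S : Finset (ℤ × ℤ)) :
    ∑ x ∈ S, ((x.1 : ℝ) ^ 2 + (x.2 : ℝ) ^ 2) * ‖Ez c x‖ ^ 2 ≤ hN 1 c ^ 2 := by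
  refine le_trans (Finset.sum_le_sum fun x _ => ?_) (Ez_sum1 hc S)
  rw [mul_pow, mul_pow, nz_sq]
  apply mul_le_mul_of_nonneg_right _ (sq_nonneg _)
  have : 1 ≤ (2 * Real.pi) ^ 2 := by nlinarith [Real.pi_gt_three]
  nlinarith [mul_nonneg (sub_nonneg.mpr this)
    (add_nonneg (sq_nonneg (x.1 : ℝ)) (sq_nonneg (x.2 : ℝ)))]

/-- `L²` bound of the modes of the nonlinearity. -/
theorem Bc_aux {c d : Coef} (hc : FinH 0 c) (hd : FinH 0 d) (k : ℤ × ℤ) :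
    Summable (fun m => ‖Ez c m * Ez d (k - m) * ((Kz m (k - m) k : ℝ) : ℂ)‖) ∧
    ∑' m, ‖Ez c m * Ez d (k - m) * ((Kz m (k - m) k : ℝ) : ℂ)‖ ≤ nz k * (hN 0 c * hN 0 d) := by
  have key : ∀ S : Finset (ℤ × ℤ),
      ∑ m ∈ S, ‖Ez c m * Ez d (k - m) * ((Kz m (k - m) k : ℝ) : ℂ)‖ ≤
        nz k * (hN 0 c * hN 0 d) := by
    intro S
    have h1 : ∑ m ∈ S, ‖Ez c m * Ez d (k - m) * ((Kz m (k - m) k : ℝ) : ℂ)‖ ≤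
        nz k * ∑ m ∈ S, ‖Ez c m‖ * ‖Ez d (k - m)‖ := by
      rw [Finset.mul_sum]
      apply Finset.sum_le_sum
      intro m _
      rw [norm_mul, norm_mul, Complex.norm_real, Real.norm_eq_abs, mul_comm]
      exact mul_le_mul_of_nonneg_right (Kz_le' m k) (by positivity)
    refine h1.trans (mul_le_mul_of_nonneg_left ?_ (nz_nonneg k))
    have cs := Finset.sum_mul_sq_le_sq_mul_sq S (fun m => ‖Ez c m‖) (fun m => ‖Ez d (k - m)‖)
    have h2 : ∑ m ∈ S, ‖Ez d (k - m)‖ ^ 2 ≤ hN 0 d ^ 2 := by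
      classical
      have := Ez_sum0 hd (S.image (fun m => k - m))
      rw [Finset.sum_image] at this
      · exact this
      · intro x _ y _ h; simpa using h
    refine (abs_le_of_sq_le_sq' (cs.trans ?_) (mul_nonneg (hN_nonneg _ _) (hN_nonneg _ _))).2
    rw [mul_pow]
    exact mul_le_mul (Ez_sum0 hc S) h2 (Finset.sum_nonneg fun _ _ => sq_nonneg _) (sq_nonneg _)
  have hs := summable_of_sum_le (fun m => norm_nonneg _) key
  exact ⟨hs, hs.tsum_le_of_sum_le key⟩

theorem Bc_norm_le {c d : Coef} (hc : FinH 0 c) (hd : FinH 0 d) (k : Freq) :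
    ‖Bc c d k‖ ≤ 2 * Real.pi * nz k.1 * (hN 0 c * hN 0 d) := by
  rw [Bc_eq, norm_mul, norm_mul, Complex.norm_I, Complex.norm_real, mul_one, Real.norm_eq_abs,
    abs_of_nonneg Real.two_pi_pos.le, mul_assoc (2 * Real.pi) (nz k.1)]
  apply mul_le_mul_of_nonneg_left _ Real.two_pi_pos.le
  exact (norm_tsum_le_tsum_norm (Bc_aux hc hd k.1).1).trans (Bc_aux hc hd k.1).2

theorem Bc_add_left {c c' d : Coef} (hc : FinH 0 c) (hc' : FinH 0 c') (hd : FinH 0 d) :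
    Bc (c + c') d = Bc c d + Bc c' d := by
  ext k
  rw [Pi.add_apply, Bc_eq, Bc_eq, Bc_eq, ← mul_add,
    ← (Bc_aux hc hd k.1).1.of_norm.tsum_add (Bc_aux hc' hd k.1).1.of_norm]
  congr 2; ext m
  rw [Ez_add]; ring

theorem Bc_add_right {c d d' : Coef} (hc : FinH 0 c) (hd : FinH 0 d) (hd' : FinH 0 d') :
    Bc c (d + d') = Bc c d + Bc c d' := by
  ext k
  rw [Pi.add_apply, Bc_eq, Bc_eq, Bc_eq, ← mul_add,
    ← (Bc_aux hc hd k.1).1.of_norm.tsum_add (Bc_aux hc hd' k.1).1.of_norm]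
  congr 2; ext m
  rw [Ez_add]; ring

theorem Bc_smul_left (r : ℝ) (c d : Coef) : Bc (r • c) d = r • Bc c d := by
  ext k
  rw [Pi.smul_apply, Bc_eq, Bc_eq, Complex.real_smul, mul_left_comm]
  have : ∑' m : ℤ × ℤ, Ez (r • c) m * Ez d (k.1 - m) * ((Kz m (k.1 - m) k.1 : ℝ) : ℂ) =
      (r : ℂ) * ∑' m : ℤ × ℤ, Ez c m * Ez d (k.1 - m) * ((Kz m (k.1 - m) k.1 : ℝ) : ℂ) := by
    rw [← tsum_mul_left]
    congr 1; ext m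
    rw [Ez_smul]; ring
  rw [this]

theorem Bc_smul_right (r : ℝ) (c d : Coef) : Bc c (r • d) = r • Bc c d := by
  ext k
  rw [Pi.smul_apply, Bc_eq, Bc_eq, Complex.real_smul, mul_left_comm]
  have : ∑' m : ℤ × ℤ, Ez c m * Ez (r • d) (k.1 - m) * ((Kz m (k.1 - m) k.1 : ℝ) : ℂ) =
      (r : ℂ) * ∑' m : ℤ × ℤ, Ez c m * Ez d (k.1 - m) * ((Kz m (k.1 - m) k.1 : ℝ) : ℂ) := by
    rw [← tsum_mul_left]
    congr 1; ext m
    rw [Ez_smul]; ring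
  rw [this]

theorem Bc_sub_left {c c' d : Coef} (hc : FinH 0 c) (hc' : FinH 0 c') (hd : FinH 0 d) :
    Bc (c - c') d = Bc c d - Bc c' d := by
  have := Bc_add_left (hc.sub hc') hc' hd
  rw [sub_add_cancel] at this
  rw [this]; simp

theorem Bc_sub_right {c d d' : Coef} (hc : FinH 0 c) (hd : FinH 0 d) (hd' : FinH 0 d') :
    Bc c (d - d') = Bc c d - Bc c d' := by
  have := Bc_add_right hc (hd.sub hd') hd'
  rw [sub_add_cancel] at this
  rw [this]; simp

/-- Terms of the trilinear form, indexed by `(k, -m)`. -/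
def Fz (c d w : Coef) (x : (ℤ × ℤ) × (ℤ × ℤ)) : ℂ :=
  Ez c (-x.2) * Ez d (x.1 + x.2) * ((Kz (-x.2) (x.1 + x.2) x.1 : ℝ) : ℂ) *
    (starRingEnd ℂ) (Ez w x.1)

theorem Fz_aux {c d w : Coef} (hc : FinH 1 c) (hd : FinH 1 d) (hw : FinH 1 w) :
    Summable (fun x => 2 * Real.pi * ‖Fz c d w x‖) ∧ ∑' x, 2 * Real.pi * ‖Fz c d w x‖ ≤
      16 * Real.sqrt (hN 0 w * hN 1 w) * Real.sqrt (hN 0 c * hN 1 c) * hN 1 d := by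
  have key : ∀ S : Finset ((ℤ × ℤ) × (ℤ × ℤ)), ∑ x ∈ S, 2 * Real.pi * ‖Fz c d w x‖ ≤
      16 * Real.sqrt (hN 0 w * hN 1 w) * Real.sqrt (hN 0 c * hN 1 c) * hN 1 d := by
    intro S
    have neg_sum : ∀ (g : ℤ × ℤ → ℝ) (S : Finset (ℤ × ℤ)),
        ∑ x ∈ S, g (-x) = ∑ x ∈ S.map (Equiv.neg (ℤ × ℤ)).toEmbedding, g x := by
      intro g S; rw [Finset.sum_map]; rfl
    have h := lady (fun x => ‖Ez w x‖) (fun x => ‖Ez c (-x)‖)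
      (fun x => 2 * Real.pi * nz x * ‖Ez d x‖) (hN 0 w) (hN 1 w) (hN 0 c) (hN 1 c) (hN 1 d)
      (fun x => norm_nonneg _) (fun x => norm_nonneg _)
      (fun x => mul_nonneg (mul_nonneg Real.two_pi_pos.le (nz_nonneg x)) (norm_nonneg _))
      (hN_nonneg _ _) hw.zero_of_one.2 (hN_nonneg _ _) hc.zero_of_one.2 (hN_nonneg _ _)
      (Ez_sum0 hw.zero_of_one.1) (Ez_sum1' hw)
      (fun S => by
        rw [neg_sum (fun x => ‖Ez c x‖ ^ 2)]
        exact Ez_sum0 hc.zero_of_one.1 _)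
      (fun S => by
        have := neg_sum (fun x => ((x.1 : ℝ) ^ 2 + (x.2 : ℝ) ^ 2) * ‖Ez c x‖ ^ 2) S
        simp only [Prod.fst_neg, Prod.snd_neg, Int.cast_neg, neg_sq] at this
        rw [this]
        exact Ez_sum1' hc _)
      (Ez_sum1 hd) S
    refine le_trans (Finset.sum_le_sum fun x _ => ?_) h
    unfold Fz
    rw [norm_mul, norm_mul, norm_mul, Complex.norm_real, Real.norm_eq_abs, RCLike.norm_conj]
    have h1 := Kz_le (-x.2) (x.1 + x.2) x.1
    have h2 : 0 ≤ 2 * Real.pi * (‖Ez c (-x.2)‖ * ‖Ez d (x.1 + x.2)‖ * ‖Ez w x.1‖) := by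
      have := Real.two_pi_pos.le
      positivity
    have := mul_le_mul_of_nonneg_left h1 h2
    linarith
  have hs := summable_of_sum_le
    (fun x => mul_nonneg Real.two_pi_pos.le (norm_nonneg (Fz c d w x))) key
  exact ⟨hs, hs.tsum_le_of_sum_le key⟩

theorem Fz_summable {c d w : Coef} (hc : FinH 1 c) (hd : FinH 1 d) (hw : FinH 1 w) :
    Summable (fun x => ‖Fz c d w x‖) :=
  (summable_mul_left_iff Real.two_pi_pos.ne').mp (Fz_aux hc hd hw).1

theorem Bc_pair (c d w : Coef) (k : Freq) : Bc c d k * (starRingEnd ℂ) (w k) =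
    (((2 * Real.pi : ℝ) : ℂ) * Complex.I) * ∑' m, Fz c d w (k.1, m) := by
  rw [Bc_eq, mul_assoc, ← tsum_mul_right]
  congr 1
  rw [← (Equiv.neg (ℤ × ℤ)).tsum_eq]
  congr 1; ext m
  simp only [Equiv.neg_apply, Fz, sub_neg_eq_add, Ez_freq]

theorem pair_summable {c d w : Coef} (hc : FinH 1 c) (hd : FinH 1 d) (hw : FinH 1 w) :
    Summable (fun k => ‖Bc c d k‖ * ‖w k‖) ∧ ∑' k, ‖Bc c d k‖ * ‖w k‖ ≤
      16 * Real.sqrt (hN 0 w * hN 1 w) * Real.sqrt (hN 0 c * hN 1 c) * hN 1 d := by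
  have hF := Fz_aux hc hd hw
  have hle : ∀ k : Freq, ‖Bc c d k‖ * ‖w k‖ ≤ ∑' m, 2 * Real.pi * ‖Fz c d w (k.1, m)‖ := by
    intro k
    have h1 := Bc_pair c d w k
    have h2 : ‖Bc c d k‖ * ‖w k‖ = ‖Bc c d k * (starRingEnd ℂ) (w k)‖ := by
      rw [norm_mul, RCLike.norm_conj]
    rw [h2, h1, norm_mul, norm_mul, Complex.norm_I, Complex.norm_real, mul_one, Real.norm_eq_abs,
      abs_of_nonneg Real.two_pi_pos.le, tsum_mul_left]
    exact mul_le_mul_of_nonneg_left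
      (norm_tsum_le_tsum_norm ((Fz_summable hc hd hw).prod_factor k.1)) Real.two_pi_pos.le
  have hz : ∑' m, 2 * Real.pi * ‖Fz c d w (0, m)‖ = 0 := by
    simp [Fz, Ez_zero]
  have hsum : Summable (fun k : Freq => ∑' m, 2 * Real.pi * ‖Fz c d w (k.1, m)‖) :=
    (freq_inj.summable_iff (f := fun k => ∑' m, 2 * Real.pi * ‖Fz c d w (k, m)‖)
      (fun x hx => by
        by_contra h
        exact hx (supp_freq (fun k => ∑' m, 2 * Real.pi * ‖Fz c d w (k, m)‖) hz h))).mpr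
      hF.1.prod
  have hs : Summable (fun k => ‖Bc c d k‖ * ‖w k‖) :=
    Summable.of_nonneg_of_le (fun k => by positivity) hle hsum
  refine ⟨hs, (hs.tsum_le_tsum hle hsum).trans ?_⟩
  rw [tsum_freq (fun k => ∑' m, 2 * Real.pi * ‖Fz c d w (k, m)‖) hz,
    ← hF.1.tsum_prod]
  exact hF.2

/-- The trilinear form `⟨B[c,d], w⟩`. -/
def tri (c d w : Coef) : ℝ := ∑' k, (Bc c d k * (starRingEnd ℂ) (w k)).re

theorem abs_re_pair_le (a b : ℂ) : |(a * (starRingEnd ℂ) b).re| ≤ ‖a‖ * ‖b‖ := by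
  refine (Complex.abs_re_le_norm _).trans ?_
  rw [norm_mul, RCLike.norm_conj]

theorem tri_summable {c d w : Coef} (hc : FinH 1 c) (hd : FinH 1 d) (hw : FinH 1 w) :
    Summable (fun k => (Bc c d k * (starRingEnd ℂ) (w k)).re) :=
  Summable.of_norm_bounded (pair_summable hc hd hw).1 (fun _ => abs_re_pair_le _ _)

theorem tri_le {c d w : Coef} (hc : FinH 1 c) (hd : FinH 1 d) (hw : FinH 1 w) :
    |tri c d w| ≤
      16 * Real.sqrt (hN 0 w * hN 1 w) * Real.sqrt (hN 0 c * hN 1 c) * hN 1 d := by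
  refine le_trans ?_ (pair_summable hc hd hw).2
  unfold tri
  rw [← Real.norm_eq_abs]
  exact tsum_of_norm_bounded (pair_summable hc hd hw).1.hasSum (fun k => abs_re_pair_le _ _)

theorem tri_eq {c d w : Coef} (hc : FinH 1 c) (hd : FinH 1 d) (hw : FinH 1 w) :
    tri c d w = ((((2 * Real.pi : ℝ) : ℂ) * Complex.I) * ∑' x, Fz c d w x).re := by
  have hs := (Fz_summable hc hd hw).of_norm
  have hz : ∑' m, Fz c d w (0, m) = 0 := by simp [Fz, Ez_zero]
  rw [hs.tsum_prod, ← tsum_freq (fun k => ∑' m, Fz c d w (k, m)) hz, ← tsum_mul_left, Complex.re_tsum]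
  · unfold tri
    congr 1; ext k
    rw [Bc_pair]
  · apply Summable.mul_left
    exact hs.prod.comp_injective freq_inj

theorem tri_antisymm {c d w : Coef} (hr : IsReal c) (hc : FinH 1 c) (hd : FinH 1 d)
    (hw : FinH 1 w) : tri c w d = - tri c d w := by
  rw [tri_eq hc hd hw, tri_eq hc hw hd]
  let τ : (ℤ × ℤ) × (ℤ × ℤ) ≃ (ℤ × ℤ) × (ℤ × ℤ) :=
    { toFun := fun x => (x.1 + x.2, -x.2)
      invFun := fun x => (x.1 + x.2, -x.2)
      left_inv := fun x => by simp
      right_inv := fun x => by simp }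
  have h : ∑' x, Fz c w d x = (starRingEnd ℂ) (∑' x, Fz c d w x) := by
    rw [← τ.tsum_eq, Complex.conj_tsum]
    congr 1; ext x
    show Fz c w d (x.1 + x.2, -x.2) = _
    simp only [Fz, neg_neg, add_neg_cancel_right, map_mul, Complex.conj_conj, Complex.conj_ofReal]
    rw [Kz_swap, Ez_real hr]
    simp only [map_neg, Complex.conj_conj]
    push_cast
    ring
  rw [h]
  simp [Complex.mul_re]

theorem tri_self {c d : Coef} (hr : IsReal c) (hc : FinH 1 c) (hd : FinH 1 d) :
    tri c d d = 0 := by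
  have := tri_antisymm hr hc hd hd
  linarith

end

section

open Filter Topology

theorem exists_cont_ext {X : Type*} [TopologicalSpace X] {T : ℝ} (hT : 0 ≤ T) {f : ℝ → X}
    (hf : ContinuousOn f (Icc 0 T)) :
    ∃ F : ℝ → X, Continuous F ∧ (∀ t ∈ Icc (0:ℝ) T, F t = f t) ∧
      ∀ t, ∃ s ∈ Icc (0:ℝ) T, F t = f s := by
  refine ⟨IccExtend hT ((Icc 0 T).domRestrict f), hf.domRestrict.Icc_extend', ?_, ?_⟩
  · intro t ht
    rw [IccExtend_of_mem hT _ ht]; rfl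
  · intro t
    exact ⟨projIcc 0 T hT t, (projIcc 0 T hT t).2, rfl⟩

theorem integral_congr_Icc {X : Type*} [NormedAddCommGroup X] [NormedSpace ℝ X] {T t : ℝ}
    {f g : ℝ → X} (ht : t ∈ Icc (0:ℝ) T) (h : ∀ s ∈ Icc (0:ℝ) T, f s = g s) :
    ∫ s in (0:ℝ)..t, f s = ∫ s in (0:ℝ)..t, g s := by
  apply intervalIntegral.integral_congr
  intro s hs
  rw [uIcc_of_le ht.1] at hs
  exact h s ⟨hs.1, hs.2.trans ht.2⟩

theorem cont_intble {X : Type*} [NormedAddCommGroup X] [NormedSpace ℝ X] {T t : ℝ}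
    {f : ℝ → X} (ht : t ∈ Icc (0:ℝ) T) (h : ContinuousOn f (Icc 0 T)) :
    IntervalIntegrable f volume 0 t := by
  apply ContinuousOn.intervalIntegrable
  rw [uIcc_of_le ht.1]
  exact h.mono (Icc_subset_Icc_right ht.2)

theorem integral_mono_T {T t : ℝ} {f : ℝ → ℝ} (ht : t ∈ Icc (0:ℝ) T)
    (h : ContinuousOn f (Icc 0 T)) (hn : ∀ s ∈ Icc (0:ℝ) T, 0 ≤ f s) :
    ∫ s in (0:ℝ)..t, f s ≤ ∫ s in (0:ℝ)..T, f s := by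
  have hT : T ∈ Icc (0:ℝ) T := ⟨ht.1.trans ht.2, le_refl _⟩
  have h1 := cont_intble ht h
  have h2 := cont_intble hT h
  have h3 : IntervalIntegrable f volume t T := h1.symm.trans h2
  rw [← intervalIntegral.integral_add_adjacent_intervals h1 h3]
  have : 0 ≤ ∫ s in t..T, f s := by
    apply intervalIntegral.integral_nonneg ht.2
    intro u hu
    exact hn u ⟨ht.1.trans hu.1, hu.2⟩
  linarith

theorem gronwall_aux {T a : ℝ} {E g h : ℝ → ℝ} (ha : 0 ≤ a)
    (hE : Continuous E) (hg : Continuous g) (hh : Continuous h)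
    (hg0 : ∀ t, 0 ≤ g t) (hh0 : ∀ t, 0 ≤ h t)
    (hle : ∀ t ∈ Icc (0:ℝ) T, E t ≤ a + ∫ s in (0:ℝ)..t, (g s * E s + h s)) :
    ∀ t ∈ Icc (0:ℝ) T, a + ∫ s in (0:ℝ)..t, (g s * E s + h s) ≤
      Real.exp (∫ s in (0:ℝ)..T, g s) * (a + ∫ s in (0:ℝ)..T, h s) := by
  intro t ht
  set Y : ℝ → ℝ := fun t => a + ∫ s in (0:ℝ)..t, (g s * E s + h s) with hY
  set G : ℝ → ℝ := fun t => ∫ s in (0:ℝ)..t, g s with hG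
  set H : ℝ → ℝ := fun t => ∫ s in (0:ℝ)..t, h s with hH
  have dY : ∀ t, HasDerivAt Y (g t * E t + h t) t := by
    intro t
    exact (((hg.mul hE).add hh).integral_hasStrictDerivAt 0 t).hasDerivAt.const_add a
  have dG : ∀ t, HasDerivAt G (g t) t := fun t => (hg.integral_hasStrictDerivAt 0 t).hasDerivAt
  have dH : ∀ t, HasDerivAt H (h t) t := fun t => (hh.integral_hasStrictDerivAt 0 t).hasDerivAt
  have hGn : ∀ t, 0 ≤ t → 0 ≤ G t := fun t ht =>
    intervalIntegral.integral_nonneg ht (fun u _ => hg0 u)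
  set Z : ℝ → ℝ := fun t => Y t * Real.exp (-G t) - H t with hZ
  have dZ : ∀ t, HasDerivAt Z ((g t * E t + h t) * Real.exp (-G t) +
      Y t * (Real.exp (-G t) * (-g t)) - h t) t := by
    intro t
    exact ((dY t).mul ((dG t).neg.exp)).sub (dH t)
  have anti : AntitoneOn Z (Icc 0 T) := by
    apply antitoneOn_of_deriv_nonpos (convex_Icc 0 T)
    · exact fun t _ => (dZ t).continuousAt.continuousWithinAt
    · exact fun t _ => (dZ t).differentiableAt.differentiableWithinAt
    · intro t ht
      rw [interior_Icc] at ht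
      rw [(dZ t).deriv]
      have h1 := hle t (Ioo_subset_Icc_self ht)
      have h2 : Real.exp (-G t) ≤ 1 := by
        rw [Real.exp_le_one_iff]
        have := hGn t ht.1.le
        linarith
      have h3 : 0 < Real.exp (-G t) := Real.exp_pos _
      have h4 : g t * E t ≤ g t * Y t := mul_le_mul_of_nonneg_left h1 (hg0 t)
      nlinarith [hh0 t]
  have h1 : Z t ≤ Z 0 := anti ⟨le_refl _, ht.1.trans ht.2⟩ ht ht.1
  have h0 : Z 0 = a := by simp [hZ, hY, hG, hH]
  have hT' : H t ≤ H T := integral_mono_T ht hh.continuousOn (fun s _ => hh0 s)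
  have hG' : G t ≤ G T := integral_mono_T ht hg.continuousOn (fun s _ => hg0 s)
  have hHn : 0 ≤ H t := intervalIntegral.integral_nonneg ht.1 (fun u _ => hh0 u)
  have h2 : Y t * Real.exp (-G t) ≤ a + H T := by
    have : Z t = Y t * Real.exp (-G t) - H t := rfl
    linarith
  have h3 : Y t = Real.exp (G t) * (Y t * Real.exp (-G t)) := by
    rw [Real.exp_neg]; field_simp
  show Y t ≤ _
  rw [h3]
  calc _ ≤ Real.exp (G t) * (a + H T) := mul_le_mul_of_nonneg_left h2 (Real.exp_pos _).le
    _ ≤ _ := mul_le_mul_of_nonneg_right (Real.exp_le_exp.mpr hG') (by linarith)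

theorem gronwall {T a : ℝ} (hT : 0 ≤ T) {E g h : ℝ → ℝ} (ha : 0 ≤ a)
    (hE : ContinuousOn E (Icc 0 T)) (hg : ContinuousOn g (Icc 0 T)) (hh : ContinuousOn h (Icc 0 T))
    (hg0 : ∀ t ∈ Icc (0:ℝ) T, 0 ≤ g t) (hh0 : ∀ t ∈ Icc (0:ℝ) T, 0 ≤ h t)
    (hle : ∀ t ∈ Icc (0:ℝ) T, E t ≤ a + ∫ s in (0:ℝ)..t, (g s * E s + h s)) :
    ∀ t ∈ Icc (0:ℝ) T, a + ∫ s in (0:ℝ)..t, (g s * E s + h s) ≤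
      Real.exp (∫ s in (0:ℝ)..T, g s) * (a + ∫ s in (0:ℝ)..T, h s) := by
  obtain ⟨E', cE, eE, -⟩ := exists_cont_ext hT hE
  obtain ⟨g', cg, eg, ng⟩ := exists_cont_ext hT hg
  obtain ⟨h', ch, eh, nh⟩ := exists_cont_ext hT hh
  have hTm : T ∈ Icc (0:ℝ) T := ⟨hT, le_refl _⟩
  have e1 : ∀ t ∈ Icc (0:ℝ) T, ∫ s in (0:ℝ)..t, (g s * E s + h s) =
      ∫ s in (0:ℝ)..t, (g' s * E' s + h' s) := fun t ht =>
    integral_congr_Icc ht (fun s hs => by rw [eE s hs, eg s hs, eh s hs])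
  intro t ht
  rw [e1 t ht, integral_congr_Icc hTm (fun s hs => (eg s hs).symm),
    integral_congr_Icc hTm (fun s hs => (eh s hs).symm)]
  refine gronwall_aux ha cE cg ch ?_ ?_ ?_ t ht
  · intro t
    obtain ⟨s, hs, e⟩ := ng t
    rw [e]; exact hg0 s hs
  · intro t
    obtain ⟨s, hs, e⟩ := nh t
    rw [e]; exact hh0 s hs
  · intro t ht
    rw [← e1 t ht, eE t ht]; exact hle t ht

/-- Real `Ḣ¹`-continuous trajectories. -/
structure Traj (T : ℝ) (v : ℝ → Coef) : Prop where
  real : ∀ t ∈ Icc (0:ℝ) T, IsReal (v t)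
  fin : ∀ t ∈ Icc (0:ℝ) T, FinH 1 (v t)
  cont : ∀ t ∈ Icc (0:ℝ) T, Tendsto (fun s => hN 1 (v s - v t)) (𝓝[Icc (0:ℝ) T] t) (𝓝 0)

theorem Traj.fin0 {T : ℝ} {v : ℝ → Coef} (h : Traj T v) :
    ∀ t ∈ Icc (0:ℝ) T, FinH 0 (v t) := fun t ht => (h.fin t ht).zero_of_one.1

theorem Traj.cont0 {T : ℝ} {v : ℝ → Coef} (h : Traj T v) :
    ∀ t ∈ Icc (0:ℝ) T, Tendsto (fun s => hN 0 (v s - v t)) (𝓝[Icc (0:ℝ) T] t) (𝓝 0) := by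
  intro t ht
  refine squeeze_zero' (Eventually.of_forall fun s => hN_nonneg _ _) ?_ (h.cont t ht)
  filter_upwards [self_mem_nhdsWithin] with s hs
  exact ((h.fin s hs).sub (h.fin t ht)).zero_of_one.2

theorem Traj.sub {T : ℝ} {v w : ℝ → Coef} (hv : Traj T v) (hw : Traj T w) :
    Traj T (fun t => v t - w t) where
  real t ht := (hv.real t ht).sub (hw.real t ht)
  fin t ht := (hv.fin t ht).sub (hw.fin t ht)
  cont t ht := by
    refine squeeze_zero' (Eventually.of_forall fun s => hN_nonneg _ _) ?_
      (by simpa using (hv.cont t ht).add (hw.cont t ht))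
    filter_upwards [self_mem_nhdsWithin] with s hs
    rw [show v s - w s - (v t - w t) = (v s - v t) - (w s - w t) by abel]
    exact hN_sub_le ((hv.fin s hs).sub (hv.fin t ht)) ((hw.fin s hs).sub (hw.fin t ht))

theorem Traj.add {T : ℝ} {v w : ℝ → Coef} (hv : Traj T v) (hw : Traj T w) :
    Traj T (fun t => v t + w t) where
  real t ht := (hv.real t ht).add (hw.real t ht)
  fin t ht := (hv.fin t ht).add (hw.fin t ht)
  cont t ht := by
    refine squeeze_zero' (Eventually.of_forall fun s => hN_nonneg _ _) ?_
      (by simpa using (hv.cont t ht).add (hw.cont t ht))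
    filter_upwards [self_mem_nhdsWithin] with s hs
    rw [show v s + w s - (v t + w t) = (v s - v t) + (w s - w t) by abel]
    exact hN_add_le ((hv.fin s hs).sub (hv.fin t ht)) ((hw.fin s hs).sub (hw.fin t ht))

theorem Traj.smul {T : ℝ} {v : ℝ → Coef} (hv : Traj T v) (r : ℝ) :
    Traj T (fun t => r • v t) where
  real t ht := (hv.real t ht).smul r
  fin t ht := (hv.fin t ht).smul r
  cont t ht := by
    have h : ∀ s, hN 1 (r • v s - r • v t) = |r| * hN 1 (v s - v t) := by
      intro s; rw [← smul_sub, hN_smul]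
    simp only [h]
    simpa using (hv.cont t ht).const_mul |r|

theorem Traj.contN1 {T : ℝ} {v : ℝ → Coef} (hv : Traj T v) :
    ContinuousOn (fun t => hN 1 (v t)) (Icc 0 T) := by
  intro t ht
  rw [ContinuousWithinAt, tendsto_iff_norm_sub_tendsto_zero]
  refine squeeze_zero' (Eventually.of_forall fun s => norm_nonneg _) ?_ (hv.cont t ht)
  filter_upwards [self_mem_nhdsWithin] with s hs
  exact hN_abs_sub_le (hv.fin s hs) (hv.fin t ht)

theorem Traj.contN0 {T : ℝ} {v : ℝ → Coef} (hv : Traj T v) :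
    ContinuousOn (fun t => hN 0 (v t)) (Icc 0 T) := by
  intro t ht
  rw [ContinuousWithinAt, tendsto_iff_norm_sub_tendsto_zero]
  refine squeeze_zero' (Eventually.of_forall fun s => norm_nonneg _) ?_ (hv.cont0 t ht)
  filter_upwards [self_mem_nhdsWithin] with s hs
  exact hN_abs_sub_le (hv.fin0 s hs) (hv.fin0 t ht)

theorem Traj.contMode {T : ℝ} {v : ℝ → Coef} (hv : Traj T v) (k : Freq) :
    ContinuousOn (fun t => v t k) (Icc 0 T) := by
  intro t ht
  rw [ContinuousWithinAt, tendsto_iff_norm_sub_tendsto_zero]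
  refine squeeze_zero' (Eventually.of_forall fun s => norm_nonneg _) ?_ (hv.cont0 t ht)
  filter_upwards [self_mem_nhdsWithin] with s hs
  exact norm_le_hN0 ((hv.fin0 s hs).sub (hv.fin0 t ht)) k

theorem Traj.contBc {T : ℝ} {v w : ℝ → Coef} (hv : Traj T v) (hw : Traj T w) (k : Freq) :
    ContinuousOn (fun t => Bc (v t) (w t) k) (Icc 0 T) := by
  intro t ht
  rw [ContinuousWithinAt, tendsto_iff_norm_sub_tendsto_zero]
  have hlim : Tendsto (fun s => 2 * Real.pi * nz k.1 * (hN 0 (v s - v t) * hN 0 (w s)) +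
      2 * Real.pi * nz k.1 * (hN 0 (v t) * hN 0 (w s - w t))) (𝓝[Icc (0:ℝ) T] t) (𝓝 0) := by
    have h1 := ((hv.cont0 t ht).mul (hw.contN0 t ht)).const_mul (2 * Real.pi * nz k.1)
    have h2 := ((hw.cont0 t ht).const_mul (hN 0 (v t))).const_mul (2 * Real.pi * nz k.1)
    simpa using h1.add h2
  refine squeeze_zero' (Eventually.of_forall fun s => norm_nonneg _) ?_ hlim
  filter_upwards [self_mem_nhdsWithin] with s hs
  have e : Bc (v s) (w s) k - Bc (v t) (w t) k =
      Bc (v s - v t) (w s) k + Bc (v t) (w s - w t) k := by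
    rw [Bc_sub_left (hv.fin0 s hs) (hv.fin0 t ht) (hw.fin0 s hs),
      Bc_sub_right (hv.fin0 t ht) (hw.fin0 s hs) (hw.fin0 t ht)]
    simp only [Pi.sub_apply]; ring
  rw [e]
  exact (norm_add_le _ _).trans (add_le_add
    (Bc_norm_le ((hv.fin0 s hs).sub (hv.fin0 t ht)) (hw.fin0 s hs) k)
    (Bc_norm_le (hv.fin0 t ht) ((hw.fin0 s hs).sub (hw.fin0 t ht)) k))

theorem bdd_on {T : ℝ} {f : ℝ → ℝ} (hf : ContinuousOn f (Icc 0 T)) :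
    ∃ M, 0 ≤ M ∧ ∀ t ∈ Icc (0:ℝ) T, f t ≤ M := by
  obtain ⟨M, hM⟩ := isCompact_Icc.exists_bound_of_continuousOn hf
  refine ⟨|M|, abs_nonneg _, fun t ht => ?_⟩
  exact (le_abs_self _).trans ((hM t ht).trans (le_abs_self _))

theorem hasSum_hN0 {c : Coef} (h : FinH 0 c) : HasSum (fun k => ‖c k‖ ^ 2) (hN 0 c ^ 2) := by
  rw [hN_sq]
  have := h.hasSum
  simpa [hSq] using this

theorem hasSum_hN1 {c : Coef} (h : FinH 1 c) :
    HasSum (fun k => lam k * ‖c k‖ ^ 2) (hN 1 c ^ 2) := by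
  rw [hN_sq]
  have := h.hasSum
  simpa [hSq] using this

/-- Energy equality, integrated form. -/
theorem energy_eq {T ν : ℝ} (hν : 0 < ν) {v : ℝ → Coef} (hv : Traj T v) {R : ℝ → Coef}
    (hder : ∀ k, ∀ t ∈ Ioo (0:ℝ) T,
      HasDerivAt (fun s => v s k) (R t k - ((ν * lam k : ℝ) : ℂ) * v t k) t)
    (hRc : ∀ k, ContinuousOn (fun t => R t k) (Icc 0 T))
    (hRs : ∃ M, ∀ t ∈ Icc (0:ℝ) T, Summable (fun k => ‖R t k‖ * ‖v t k‖) ∧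
      ∑' k, ‖R t k‖ * ‖v t k‖ ≤ M) :
    ∀ t ∈ Icc (0:ℝ) T, ∃ Q : ℝ → ℝ, IntegrableOn Q (Ioc 0 t) ∧
      (∀ s ∈ Icc (0:ℝ) T, Q s = 2 * ∑' k, (R s k * (starRingEnd ℂ) (v s k)).re
        - 2 * ν * hN 1 (v s) ^ 2) ∧
      hN 0 (v t) ^ 2 - hN 0 (v 0) ^ 2 = ∫ s in (0:ℝ)..t, Q s := by
  intro t ht
  obtain ⟨M, hM⟩ := hRs
  obtain ⟨M1, hM1, hM1'⟩ := bdd_on (hv.contN1.pow 2)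
  have h0 : (0:ℝ) ∈ Icc (0:ℝ) T := ⟨le_refl _, ht.1.trans ht.2⟩
  set F : Freq → ℝ → ℝ := fun k s => 2 * (R s k * (starRingEnd ℂ) (v s k)).re
    - 2 * ν * (lam k * ‖v s k‖ ^ 2) with hF
  have hFc : ∀ k, ContinuousOn (F k) (Icc 0 T) := by
    intro k
    have h1 := hv.contMode k
    have h2 : ContinuousOn (fun s => R s k * (starRingEnd ℂ) (v s k)) (Icc 0 T) :=
      (hRc k).mul (Complex.continuous_conj.comp_continuousOn h1)
    exact ((Complex.continuous_re.comp_continuousOn h2).const_mul 2).sub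
      (((h1.norm.pow 2).const_mul _).const_mul _)
  have hFint : ∀ k, IntegrableOn (F k) (Ioc 0 t) := by
    intro k
    exact (intervalIntegrable_iff_integrableOn_Ioc_of_le ht.1).mp (cont_intble ht (hFc k))
  have hFle : ∀ k, ∀ s, ‖F k s‖ ≤ 2 * (‖R s k‖ * ‖v s k‖) + 2 * ν * (lam k * ‖v s k‖ ^ 2) := by
    intro k s
    refine (norm_sub_le _ _).trans ?_
    rw [norm_mul, Real.norm_eq_abs, Real.norm_eq_abs, Real.norm_eq_abs]
    have h1 := abs_re_pair_le (R s k) (v s k)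
    have h2 : |2 * ν * (lam k * ‖v s k‖ ^ 2)| = 2 * ν * (lam k * ‖v s k‖ ^ 2) := by
      apply abs_of_nonneg
      have := (lam_pos k).le
      positivity
    rw [h2, abs_two]
    linarith
  have hHS : ∀ s ∈ Icc (0:ℝ) T, HasSum (fun k => F k s)
      (2 * ∑' k, (R s k * (starRingEnd ℂ) (v s k)).re - 2 * ν * hN 1 (v s) ^ 2) := by
    intro s hs
    have h1 : Summable (fun k => (R s k * (starRingEnd ℂ) (v s k)).re) :=
      Summable.of_norm_bounded (hM s hs).1 (fun _ => abs_re_pair_le _ _)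
    exact (h1.hasSum.mul_left 2).sub ((hasSum_hN1 (hv.fin s hs)).mul_left (2 * ν))
  have hbound : ∀ s ∈ Icc (0:ℝ) T, ∀ S : Finset Freq, ∑ k ∈ S, ‖F k s‖ ≤ 2 * M + 2 * ν * M1 := by
    intro s hs S
    have h1 := (hM s hs).1.sum_le_tsum S (fun k _ => by positivity)
    have h2 := (hasSum_hN1 (hv.fin s hs)).summable.sum_le_tsum S
      (fun k _ => mul_nonneg (lam_pos k).le (sq_nonneg _))
    rw [(hasSum_hN1 (hv.fin s hs)).tsum_eq] at h2
    have h3 := (hM s hs).2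
    have h4 := hM1' s hs
    refine (Finset.sum_le_sum fun k _ => hFle k s).trans ?_
    rw [Finset.sum_add_distrib, ← Finset.mul_sum, ← Finset.mul_sum]
    have h5 : 2 * ν * ∑ k ∈ S, lam k * ‖v s k‖ ^ 2 ≤ 2 * ν * M1 :=
      mul_le_mul_of_nonneg_left (h2.trans h4) (by positivity)
    linarith
  have hsub : ∀ s ∈ Ioc (0:ℝ) t, s ∈ Icc (0:ℝ) T := fun s hs => ⟨hs.1.le, hs.2.trans ht.2⟩
  have hsumint : Summable (fun k => ∫ s in Ioc 0 t, ‖F k s‖) := by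
    apply summable_of_sum_le (c := t * (2 * M + 2 * ν * M1))
    · intro k
      exact integral_nonneg fun _ => norm_nonneg _
    · intro S
      rw [← integral_finsetSum S (fun k _ => (hFint k).norm)]
      have h1 : ∫ s in Ioc 0 t, ∑ k ∈ S, ‖F k s‖ ≤ ∫ _ in Ioc 0 t, (2 * M + 2 * ν * M1) := by
        apply setIntegral_mono_on
        · exact integrable_finsetSum S (fun k _ => (hFint k).norm)
        · exact integrableOn_const (by simp)
        · exact measurableSet_Ioc
        · intro s hs
          exact hbound s (hsub s hs) S
      refine h1.trans (le_of_eq ?_)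
      rw [setIntegral_const]
      simp [ht.1]
  have hmain := hasSum_integral_of_summable_integral_norm hFint hsumint
  have hmode : ∀ k, ∫ s in Ioc 0 t, F k s = ‖v t k‖ ^ 2 - ‖v 0 k‖ ^ 2 := by
    intro k
    rw [← intervalIntegral.integral_of_le ht.1]
    apply intervalIntegral.integral_eq_sub_of_hasDerivAt_of_le ht.1
    · exact ((hv.contMode k).norm.pow 2).mono (Icc_subset_Icc_right ht.2)
    · intro s hs
      have := (hder k s ⟨hs.1, hs.2.trans_le ht.2⟩).norm_sq
      have e : F k s = 2 * inner ℝ (v s k) (R s k - ((ν * lam k : ℝ) : ℂ) * v s k) := by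
        rw [hF, Complex.inner]
        simp only [← Complex.normSq_eq_norm_sq, Complex.normSq_apply]
        simp [Complex.mul_re, Complex.mul_im]
        ring
      rw [e]
      exact this
    · exact cont_intble ht (hFc k)
  simp only [hmode] at hmain
  have hE : HasSum (fun k => ‖v t k‖ ^ 2 - ‖v 0 k‖ ^ 2) (hN 0 (v t) ^ 2 - hN 0 (v 0) ^ 2) :=
    (hasSum_hN0 (hv.fin0 t ht)).sub (hasSum_hN0 (hv.fin0 0 h0))
  have heq := hE.unique hmain
  refine ⟨fun s => ∑' k, F k s, ?_, fun s hs => (hHS s hs).tsum_eq, ?_⟩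
  · have hmeas : AEStronglyMeasurable (fun s => ∑' k, F k s) (volume.restrict (Ioc 0 t)) := by
      apply aestronglyMeasurable_of_tendsto_ae (u := (atTop : Filter (Finset Freq)))
        (f := fun S s => ∑ k ∈ S, F k s)
      · intro S
        exact (integrable_finsetSum S (fun k _ => hFint k)).aestronglyMeasurable
      · rw [ae_restrict_iff' measurableSet_Ioc]
        refine Eventually.of_forall fun s hs => ?_
        exact (hHS s (hsub s hs)).summable.hasSum
    refine Integrable.of_bound hmeas (2 * M + 2 * ν * M1) ?_
    rw [ae_restrict_iff' measurableSet_Ioc]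
    refine Eventually.of_forall fun s hs => ?_
    refine le_of_tendsto ((hHS s (hsub s hs)).summable.hasSum.norm) ?_
    exact Eventually.of_forall fun S => (norm_sum_le _ _).trans (hbound s (hsub s hs) S)
  · rw [intervalIntegral.integral_of_le ht.1]
    exact heq

/-- Energy inequality. -/
theorem energy {T ν : ℝ} (hT : 0 ≤ T) (hν : 0 < ν) {v : ℝ → Coef} (hv : Traj T v) {R : ℝ → Coef}
    {g h : ℝ → ℝ}
    (hder : ∀ k, ∀ t ∈ Ioo (0:ℝ) T,
      HasDerivAt (fun s => v s k) (R t k - ((ν * lam k : ℝ) : ℂ) * v t k) t)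
    (hRc : ∀ k, ContinuousOn (fun t => R t k) (Icc 0 T))
    (hRs : ∃ M, ∀ t ∈ Icc (0:ℝ) T, Summable (fun k => ‖R t k‖ * ‖v t k‖) ∧
      ∑' k, ‖R t k‖ * ‖v t k‖ ≤ M)
    (hg : ContinuousOn g (Icc 0 T)) (hh : ContinuousOn h (Icc 0 T))
    (hg0 : ∀ t ∈ Icc (0:ℝ) T, 0 ≤ g t) (hh0 : ∀ t ∈ Icc (0:ℝ) T, 0 ≤ h t)
    (hineq : ∀ t ∈ Icc (0:ℝ) T, 2 * ∑' k, (R t k * (starRingEnd ℂ) (v t k)).re ≤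
      ν * hN 1 (v t) ^ 2 + g t * hN 0 (v t) ^ 2 + h t) :
    ∀ t ∈ Icc (0:ℝ) T, hN 0 (v t) ^ 2 + ν * ∫ s in (0:ℝ)..t, hN 1 (v s) ^ 2 ≤
      Real.exp (∫ s in (0:ℝ)..T, g s) * (hN 0 (v 0) ^ 2 + ∫ s in (0:ℝ)..T, h s) := by
  have hE : ContinuousOn (fun t => hN 0 (v t) ^ 2) (Icc 0 T) := hv.contN0.pow 2
  have hD : ContinuousOn (fun t => hN 1 (v t) ^ 2) (Icc 0 T) := hv.contN1.pow 2
  have key : ∀ t ∈ Icc (0:ℝ) T, hN 0 (v t) ^ 2 + ν * ∫ s in (0:ℝ)..t, hN 1 (v s) ^ 2 ≤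
      hN 0 (v 0) ^ 2 + ∫ s in (0:ℝ)..t, (g s * hN 0 (v s) ^ 2 + h s) := by
    intro t ht
    obtain ⟨Q, hQ, hQ2, hQ3⟩ := energy_eq hν hv hder hRc hRs t ht
    have i1 : IntervalIntegrable (fun s => g s * hN 0 (v s) ^ 2 + h s) volume 0 t :=
      cont_intble ht ((hg.mul hE).add hh)
    have i2 : IntervalIntegrable (fun s => ν * hN 1 (v s) ^ 2) volume 0 t :=
      cont_intble ht (hD.const_mul ν)
    have h1 : ∫ s in (0:ℝ)..t, Q s ≤
        ∫ s in (0:ℝ)..t, ((g s * hN 0 (v s) ^ 2 + h s) - ν * hN 1 (v s) ^ 2) := by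
      apply intervalIntegral.integral_mono_on ht.1
      · exact (intervalIntegrable_iff_integrableOn_Ioc_of_le ht.1).mpr hQ
      · exact i1.sub i2
      · intro s hs
        have hs' : s ∈ Icc (0:ℝ) T := ⟨hs.1, hs.2.trans ht.2⟩
        rw [hQ2 s hs']
        have := hineq s hs'
        linarith
    rw [intervalIntegral.integral_sub i1 i2, intervalIntegral.integral_const_mul] at h1
    linarith
  intro t ht
  refine (key t ht).trans ?_
  refine gronwall hT (sq_nonneg _) hE hg hh hg0 hh0 ?_ t ht
  intro t ht
  have h1 : 0 ≤ ∫ s in (0:ℝ)..t, hN 1 (v s) ^ 2 :=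
    intervalIntegral.integral_nonneg ht.1 (fun _ _ => sq_nonneg _)
  have := key t ht
  have := mul_nonneg hν.le h1
  linarith

end

section

open Filter Topology

/-- Real `L²` pairing. -/
def pr (R w : Coef) : ℝ := ∑' k, (R k * (starRingEnd ℂ) (w k)).re

theorem tri_eq_pr (c d w : Coef) : tri c d w = pr (Bc c d) w := rfl

/-- Forcing terms whose pairing with a trajectory is well behaved. -/
structure Good (T : ℝ) (w : ℝ → Coef) (R : ℝ → Coef) : Prop where
  cont : ∀ k, ContinuousOn (fun t => R t k) (Icc 0 T)
  sum : ∃ M, ∀ t ∈ Icc (0:ℝ) T, Summable (fun k => ‖R t k‖ * ‖w t k‖) ∧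
      ∑' k, ‖R t k‖ * ‖w t k‖ ≤ M

theorem pair_sum_re {R w : Coef} (h : Summable (fun k => ‖R k‖ * ‖w k‖)) :
    Summable (fun k => (R k * (starRingEnd ℂ) (w k)).re) :=
  Summable.of_norm_bounded h (fun _ => abs_re_pair_le _ _)

theorem Good.add {T : ℝ} {w R R' : ℝ → Coef} (h : Good T w R) (h' : Good T w R') :
    Good T w (fun t => R t + R' t) where
  cont k := (h.cont k).add (h'.cont k)
  sum := by
    obtain ⟨M, hM⟩ := h.sum
    obtain ⟨M', hM'⟩ := h'.sum
    refine ⟨M + M', fun t ht => ?_⟩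
    have hs := (hM t ht).1.add (hM' t ht).1
    have hle : ∀ k, ‖(R t + R' t) k‖ * ‖w t k‖ ≤ ‖R t k‖ * ‖w t k‖ + ‖R' t k‖ * ‖w t k‖ := by
      intro k
      rw [← add_mul]
      exact mul_le_mul_of_nonneg_right (norm_add_le _ _) (norm_nonneg _)
    have hs' := Summable.of_nonneg_of_le (fun k => by positivity) hle hs
    refine ⟨hs', (hs'.tsum_le_tsum hle hs).trans ?_⟩
    rw [(hM t ht).1.tsum_add (hM' t ht).1]
    exact add_le_add (hM t ht).2 (hM' t ht).2

theorem Good.smul {T : ℝ} {w R : ℝ → Coef} (h : Good T w R) (r : ℝ) :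
    Good T w (fun t => r • R t) where
  cont k := (h.cont k).const_smul r
  sum := by
    obtain ⟨M, hM⟩ := h.sum
    refine ⟨|r| * M, fun t ht => ?_⟩
    have e : (fun k => ‖(r • R t) k‖ * ‖w t k‖) = fun k => |r| * (‖R t k‖ * ‖w t k‖) := by
      funext k
      rw [Pi.smul_apply, norm_smul, Real.norm_eq_abs, mul_assoc]
    rw [e, tsum_mul_left]
    exact ⟨(hM t ht).1.mul_left _, mul_le_mul_of_nonneg_left (hM t ht).2 (abs_nonneg _)⟩

theorem Good.neg {T : ℝ} {w R : ℝ → Coef} (h : Good T w R) : Good T w (fun t => - R t) := by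
  have := h.smul (-1)
  simpa using this

theorem Good.Bc {T : ℝ} {w a b : ℝ → Coef} (hw : Traj T w) (ha : Traj T a) (hb : Traj T b) :
    Good T w (fun t => Bc (a t) (b t)) where
  cont k := ha.contBc hb k
  sum := by
    have hc : ContinuousOn (fun t => 16 * √(hN 0 (w t) * hN 1 (w t)) *
        √(hN 0 (a t) * hN 1 (a t)) * hN 1 (b t)) (Icc 0 T) :=
      ((continuousOn_const.mul (hw.contN0.mul hw.contN1).sqrt).mul
        (ha.contN0.mul ha.contN1).sqrt).mul hb.contN1
    obtain ⟨M, -, hM⟩ := bdd_on hc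
    refine ⟨M, fun t ht => ?_⟩
    have := pair_summable (ha.fin t ht) (hb.fin t ht) (hw.fin t ht)
    exact ⟨this.1, this.2.trans (hM t ht)⟩

theorem pair_cs {f w : Coef} (hf : FinH 0 f) (hw : FinH 0 w) :
    Summable (fun k => ‖f k‖ * ‖w k‖) ∧ 2 * ∑' k, ‖f k‖ * ‖w k‖ ≤ hN 0 f ^ 2 + hN 0 w ^ 2 := by
  have h1 := hasSum_hN0 hf
  have h2 := hasSum_hN0 hw
  have hs := (h1.add h2)
  have hle : ∀ k, 2 * (‖f k‖ * ‖w k‖) ≤ ‖f k‖ ^ 2 + ‖w k‖ ^ 2 := by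
    intro k; nlinarith [sq_nonneg (‖f k‖ - ‖w k‖)]
  have hs' : Summable (fun k => 2 * (‖f k‖ * ‖w k‖)) :=
    Summable.of_nonneg_of_le (fun k => by positivity) hle hs.summable
  refine ⟨(summable_mul_left_iff two_ne_zero).mp hs', ?_⟩
  rw [← tsum_mul_left, ← hs.tsum_eq]
  exact hs'.tsum_le_tsum hle hs.summable

theorem Good.const {T : ℝ} {w : ℝ → Coef} {f : Coef} (hw : Traj T w) (hf : FinH 0 f) :
    Good T w (fun _ => f) where
  cont k := continuousOn_const
  sum := by
    obtain ⟨M, -, hM⟩ := bdd_on (hw.contN0.pow 2)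
    refine ⟨hN 0 f ^ 2 + M, fun t ht => ?_⟩
    have := pair_cs hf (hw.fin0 t ht)
    refine ⟨this.1, ?_⟩
    have h1 := hM t ht
    simp only [Pi.pow_apply] at h1
    have h3 : 0 ≤ ∑' k, ‖f k‖ * ‖w t k‖ := tsum_nonneg fun k => by positivity
    linarith [this.2]

theorem Good.summ {T : ℝ} {w R : ℝ → Coef} (h : Good T w R) {t : ℝ} (ht : t ∈ Icc (0:ℝ) T) :
    Summable (fun k => (R t k * (starRingEnd ℂ) (w t k)).re) := by
  obtain ⟨M, hM⟩ := h.sum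
  exact pair_sum_re (hM t ht).1

theorem pr_add {R R' w : Coef} (h : Summable (fun k => (R k * (starRingEnd ℂ) (w k)).re))
    (h' : Summable (fun k => (R' k * (starRingEnd ℂ) (w k)).re)) :
    pr (R + R') w = pr R w + pr R' w := by
  unfold pr
  rw [← h.tsum_add h']
  congr 1; funext k
  simp [add_mul]

theorem pr_smul (r : ℝ) (R w : Coef) : pr (r • R) w = r * pr R w := by
  unfold pr
  rw [← tsum_mul_left]
  congr 1; funext k
  simp [mul_assoc]

theorem pr_neg (R w : Coef) : pr (-R) w = - pr R w := by
  have := pr_smul (-1) R w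
  simpa using this

theorem IsNSSol.traj {ν T : ℝ} {f θ : Coef} {u : ℝ → Coef} (hθ : MemH 1 θ)
    (h : IsNSSol ν f T θ u) : Traj T u where
  real := h.real
  fin t ht := by
    rcases eq_or_lt_of_le ht.1 with h0 | h0
    · rw [← h0, h.at_zero]; exact hθ.2
    · exact (h.memL2H2.1 t ⟨h0, ht.2⟩).2.one_of_two
  cont t ht := by
    rw [Metric.tendsto_nhdsWithin_nhds]
    intro ε hε
    obtain ⟨δ, hδ, H⟩ := h.contH1 t ht ε hε
    refine ⟨δ, hδ, fun s hs hst => ?_⟩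
    rw [Real.dist_eq, sub_zero, abs_of_nonneg (hN_nonneg _ _)]
    exact H s hs (by rwa [Real.dist_eq] at hst)

/-- Energy bound for the base solution. -/
theorem ns_energy {ν T : ℝ} (hT : 0 ≤ T) (hν : 0 < ν) {f θ : Coef} (hf : FinH 0 f)
    {u : ℝ → Coef} (hθ : MemH 1 θ) (h : IsNSSol ν f T θ u) :
    ν * ∫ s in (0:ℝ)..T, hN 1 (u s) ^ 2 ≤
      Real.exp T * (hN 1 θ ^ 2 + T * hN 0 f ^ 2) := by
  have hv := h.traj hθ
  have hTm : T ∈ Icc (0:ℝ) T := ⟨hT, le_refl _⟩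
  have hG1 : Good T u (fun _ => f) := Good.const hv hf
  have hG2 : Good T u (fun t => - Bc (u t) (u t)) := (Good.Bc hv hv hv).neg
  have hG := hG1.add hG2
  have key := energy (g := fun _ => 1) (h := fun _ => hN 0 f ^ 2) hT hν hv
    (R := fun t => f + - Bc (u t) (u t)) ?_ hG.cont hG.sum continuousOn_const continuousOn_const
    (fun _ _ => zero_le_one) (fun _ _ => sq_nonneg _) ?_ T hTm
  · simp only [intervalIntegral.integral_const, smul_eq_mul, sub_zero, mul_one] at key
    rw [h.at_zero] at key
    have h1 : hN 0 θ ^ 2 ≤ hN 1 θ ^ 2 := by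
      have := hθ.2.zero_of_one.2
      exact pow_le_pow_left₀ (hN_nonneg _ _) this 2
    have h2 : Real.exp T * (hN 0 θ ^ 2 + T * hN 0 f ^ 2) ≤
        Real.exp T * (hN 1 θ ^ 2 + T * hN 0 f ^ 2) :=
      mul_le_mul_of_nonneg_left (by linarith) (Real.exp_pos _).le
    have h3 := sq_nonneg (hN 0 (u T))
    linarith
  · intro k t ht
    have := h.deriv k t ⟨ht.1, ht.2.le⟩
    convert this using 1
    simp only [Pi.add_apply, Pi.neg_apply]; ring
  · intro t ht
    change 2 * pr (f + - Bc (u t) (u t)) (u t) ≤ _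
    rw [pr_add (hG1.summ ht) (hG2.summ ht), pr_neg, ← tri_eq_pr,
      tri_self (hv.real t ht) (hv.fin t ht) (hv.fin t ht)]
    have h1 := pair_cs hf (hv.fin0 t ht)
    have h2 : pr f (u t) ≤ ∑' k, ‖f k‖ * ‖u t k‖ :=
      (pair_sum_re h1.1).tsum_le_tsum (fun k => (le_abs_self _).trans (abs_re_pair_le _ _)) h1.1
    have h3 : 0 ≤ ν * hN 1 (u t) ^ 2 := by positivity
    linarith [h1.2]

/-- `v` solves the linearised equation along `u₀` with forcing `-N`. -/
structure LinForced (ν T : ℝ) (u₀ v N : ℝ → Coef) (h : ℝ → ℝ) : Prop where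
  traj : Traj T v
  der : ∀ k, ∀ t ∈ Ioc (0:ℝ) T, HasDerivAt (fun s => v s k)
    (-(Bc (u₀ t) (v t) k + Bc (v t) (u₀ t) k + N t k) - ((ν * lam k : ℝ) : ℂ) * v t k) t
  good : ∀ w, Traj T w → Good T w N
  le : ∀ t ∈ Icc (0:ℝ) T, ∀ w, FinH 1 w → |pr (N t) w| ≤ h t * hN 1 w
  hc : ContinuousOn h (Icc 0 T)
  h0 : ∀ t ∈ Icc (0:ℝ) T, 0 ≤ h t
  sm : ∀ t ∈ Icc (0:ℝ) T, ∀ w, FinH 1 w → Summable (fun k => ‖N t k‖ * ‖w k‖)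

theorem LinForced.add {ν T : ℝ} {u₀ v N v' N' : ℝ → Coef} {h h' : ℝ → ℝ} (hu : Traj T u₀)
    (H : LinForced ν T u₀ v N h) (H' : LinForced ν T u₀ v' N' h') :
    LinForced ν T u₀ (fun t => v t + v' t) (fun t => N t + N' t) (fun t => h t + h' t) where
  traj := H.traj.add H'.traj
  der k t ht := by
    have ht' := Ioc_subset_Icc_self ht
    refine HasDerivAt.congr_deriv ((H.der k t ht).add (H'.der k t ht)) ?_
    rw [Bc_add_left (H.traj.fin0 t ht') (H'.traj.fin0 t ht') (hu.fin0 t ht'),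
      Bc_add_right (hu.fin0 t ht') (H.traj.fin0 t ht') (H'.traj.fin0 t ht')]
    simp only [Pi.add_apply]; ring
  good w hw := (H.good w hw).add (H'.good w hw)
  le t ht w hw := by
    rw [pr_add (pair_sum_re (H.sm t ht w hw)) (pair_sum_re (H'.sm t ht w hw)), add_mul]
    exact (abs_add_le _ _).trans (add_le_add (H.le t ht w hw) (H'.le t ht w hw))
  hc := H.hc.add H'.hc
  h0 t ht := add_nonneg (H.h0 t ht) (H'.h0 t ht)
  sm t ht w hw := by
    refine Summable.of_nonneg_of_le (fun k => by positivity) (fun k => ?_)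
      ((H.sm t ht w hw).add (H'.sm t ht w hw))
    rw [← add_mul]
    exact mul_le_mul_of_nonneg_right (norm_add_le _ _) (norm_nonneg _)

theorem LinForced.smul {ν T : ℝ} {u₀ v N : ℝ → Coef} {h : ℝ → ℝ}
    (H : LinForced ν T u₀ v N h) (r : ℝ) :
    LinForced ν T u₀ (fun t => r • v t) (fun t => r • N t) (fun t => |r| * h t) where
  traj := H.traj.smul r
  der k t ht := by
    refine HasDerivAt.congr_deriv ((H.der k t ht).const_smul r) ?_
    rw [Bc_smul_left, Bc_smul_right]
    simp only [Pi.smul_apply, Complex.real_smul]; ring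
  good w hw := (H.good w hw).smul r
  le t ht w hw := by
    rw [pr_smul, abs_mul, mul_assoc]
    exact mul_le_mul_of_nonneg_left (H.le t ht w hw) (abs_nonneg _)
  hc := H.hc.const_mul _
  h0 t ht := mul_nonneg (abs_nonneg _) (H.h0 t ht)
  sm t ht w hw := by
    have e : (fun k => ‖(r • N t) k‖ * ‖w k‖) = fun k => |r| * (‖N t k‖ * ‖w k‖) := by
      funext k
      rw [Pi.smul_apply, norm_smul, Real.norm_eq_abs, mul_assoc]
    rw [e]
    exact (H.sm t ht w hw).mul_left _

theorem sqrt_mul_self_aux {a : ℝ} (x : ℝ) (h : 0 ≤ a) : x * √a * √a = x * a := by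
  rw [mul_assoc, Real.mul_self_sqrt h]

/-- The difference of two Navier-Stokes solutions. -/
theorem diff_forced {ν T : ℝ} {f θ θ₀ : Coef} {u u₀ : ℝ → Coef} (hθ : MemH 1 θ)
    (hθ₀ : MemH 1 θ₀) (h : IsNSSol ν f T θ u) (h₀ : IsNSSol ν f T θ₀ u₀) :
    LinForced ν T u₀ (fun t => u t - u₀ t) (fun t => Bc (u t - u₀ t) (u t - u₀ t))
      (fun t => 16 * (hN 0 (u t - u₀ t) * hN 1 (u t - u₀ t))) := by
  have hu := h.traj hθ
  have hu0 := h₀.traj hθ₀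
  have hD := hu.sub hu0
  refine ⟨hD, ?_, ?_, ?_, ?_, ?_, ?_⟩
  · intro k t ht
    have ht' := Ioc_subset_Icc_self ht
    refine HasDerivAt.congr_deriv ((h.deriv k t ht).sub (h₀.deriv k t ht)) ?_
    have a := hu.fin0 t ht'
    have b := hu0.fin0 t ht'
    rw [Bc_sub_left a b (a.sub b), Bc_sub_right a a b, Bc_sub_right b a b, Bc_sub_left a b b]
    simp only [Pi.sub_apply]; ring
  · intro w hw
    exact Good.Bc hw hD hD
  · intro t ht w hw
    have d := hD.fin t ht
    rw [← tri_eq_pr, ← neg_neg (tri _ _ _), ← tri_antisymm (hD.real t ht) d d hw, abs_neg]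
    have := tri_le d hw d
    rw [sqrt_mul_self_aux _ (mul_nonneg (hN_nonneg _ _) (hN_nonneg _ _))] at this
    exact this
  · exact (hD.contN0.mul hD.contN1).const_mul 16
  · intro t ht
    exact mul_nonneg (by norm_num) (mul_nonneg (hN_nonneg _ _) (hN_nonneg _ _))
  · intro t ht w hw
    exact (pair_summable (hD.fin t ht) (hD.fin t ht) hw).1

/-- Energy estimate for the forced linearised equation. -/
theorem lin_est {ν T : ℝ} (hT : 0 ≤ T) (hν : 0 < ν) {u₀ v N : ℝ → Coef} {h H : ℝ → ℝ}
    (hu : Traj T u₀) (F : LinForced ν T u₀ v N h)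
    (hH : ContinuousOn H (Icc 0 T)) (hH0 : ∀ t ∈ Icc (0:ℝ) T, 0 ≤ H t)
    (hle : ∀ t ∈ Icc (0:ℝ) T, -(2 * pr (N t) (v t)) ≤ ν / 2 * hN 1 (v t) ^ 2 + H t) :
    ∀ t ∈ Icc (0:ℝ) T, hN 0 (v t) ^ 2 + ν * ∫ s in (0:ℝ)..t, hN 1 (v s) ^ 2 ≤
      Real.exp (512 / ν * ∫ s in (0:ℝ)..T, hN 1 (u₀ s) ^ 2) *
        (hN 0 (v 0) ^ 2 + ∫ s in (0:ℝ)..T, H s) := by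
  have hv := F.traj
  have G1 : Good T v (fun t => Bc (u₀ t) (v t)) := Good.Bc hv hu hv
  have G2 : Good T v (fun t => Bc (v t) (u₀ t)) := Good.Bc hv hv hu
  have G3 := F.good v hv
  have G := ((G1.add G2).add G3).neg
  intro t ht
  rw [← intervalIntegral.integral_const_mul (512 / ν)]
  refine energy hT hν hv (R := fun t => -(Bc (u₀ t) (v t) + Bc (v t) (u₀ t) + N t))
    (g := fun s => 512 / ν * hN 1 (u₀ s) ^ 2) ?_ G.cont G.sum
    ((hu.contN1.pow 2).const_mul _) hH (fun t _ => by positivity) hH0 ?_ t ht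
  · intro k t ht
    exact F.der k t ⟨ht.1, ht.2.le⟩
  · intro t ht
    change 2 * pr (-(Bc (u₀ t) (v t) + Bc (v t) (u₀ t) + N t)) (v t) ≤ _
    rw [pr_neg, pr_add ((G1.add G2).summ ht) (G3.summ ht), pr_add (G1.summ ht) (G2.summ ht),
      ← tri_eq_pr, ← tri_eq_pr, tri_self (hu.real t ht) (hu.fin t ht) (hv.fin t ht)]
    have h1 := tri_le (hv.fin t ht) (hu.fin t ht) (hv.fin t ht)
    rw [sqrt_mul_self_aux _ (mul_nonneg (hN_nonneg _ _) (hN_nonneg _ _))] at h1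
    have h2 := hle t ht
    have h3 := (abs_le.mp h1).1
    have h4 : 32 * (hN 0 (v t) * hN 1 (v t) * hN 1 (u₀ t)) ≤
        ν / 2 * hN 1 (v t) ^ 2 + 512 / ν * hN 1 (u₀ t) ^ 2 * hN 0 (v t) ^ 2 := by
      have e : ν / 2 * hN 1 (v t) ^ 2 + 512 / ν * hN 1 (u₀ t) ^ 2 * hN 0 (v t) ^ 2 -
          32 * (hN 0 (v t) * hN 1 (v t) * hN 1 (u₀ t)) =
          (ν * hN 1 (v t) - 32 * hN 1 (u₀ t) * hN 0 (v t)) ^ 2 / (2 * ν) := by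
        field_simp; ring
      have : 0 ≤ (ν * hN 1 (v t) - 32 * hN 1 (u₀ t) * hN 0 (v t)) ^ 2 / (2 * ν) := by positivity
      linarith
    linarith

/-- Lipschitz constant (squared). -/
def Lc (ν T F B : ℝ) : ℝ := Real.exp (512 / ν * (Real.exp T * (B ^ 2 + T * F ^ 2) / ν))

theorem Lc_pos (ν T F B : ℝ) : 0 < Lc ν T F B := Real.exp_pos _

theorem exp_le_Lc {ν T B : ℝ} (hT : 0 ≤ T) (hν : 0 < ν) {f θ : Coef} (hf : FinH 0 f)
    {u : ℝ → Coef} (hθ : MemH 1 θ) (hB : hN 1 θ ≤ B) (h : IsNSSol ν f T θ u) :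
    Real.exp (512 / ν * ∫ s in (0:ℝ)..T, hN 1 (u s) ^ 2) ≤ Lc ν T (hN 0 f) B := by
  have h1 := ns_energy hT hν hf hθ h
  apply Real.exp_le_exp.mpr
  apply mul_le_mul_of_nonneg_left _ (by positivity)
  rw [le_div_iff₀ hν, mul_comm]
  refine h1.trans (mul_le_mul_of_nonneg_left ?_ (Real.exp_pos _).le)
  have := pow_le_pow_left₀ (hN_nonneg _ _) hB 2
  linarith

theorem lipschitz {ν T B : ℝ} (hT : 0 ≤ T) (hν : 0 < ν) {f θ θ₀ : Coef} (hf : FinH 0 f)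
    {u u₀ : ℝ → Coef} (hθ : MemH 1 θ) (hθ₀ : MemH 1 θ₀) (hB : hN 1 θ₀ ≤ B)
    (h : IsNSSol ν f T θ u) (h₀ : IsNSSol ν f T θ₀ u₀) :
    ∀ t ∈ Icc (0:ℝ) T, hN 0 (u t - u₀ t) ^ 2 + ν * ∫ s in (0:ℝ)..t, hN 1 (u s - u₀ s) ^ 2 ≤
      Lc ν T (hN 0 f) B * hN 0 (θ - θ₀) ^ 2 := by
  intro t ht
  have F := diff_forced hθ hθ₀ h h₀
  have key := lin_est hT hν (h₀.traj hθ₀) F (H := fun _ => 0) continuousOn_const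
    (fun _ _ => le_refl _) ?_ t ht
  · simp only [intervalIntegral.integral_zero, add_zero, h.at_zero, h₀.at_zero] at key
    exact key.trans (mul_le_mul_of_nonneg_right (exp_le_Lc hT hν hf hθ₀ hB h₀) (sq_nonneg _))
  · intro t ht
    have d := F.traj.fin t ht
    rw [← tri_eq_pr, tri_self (F.traj.real t ht) d d]
    have : 0 ≤ ν / 2 * hN 1 (u t - u₀ t) ^ 2 := by positivity
    simpa using this

/-- Quadratic constant. -/
def Kc (ν T F B : ℝ) : ℝ := √(Lc ν T F B * (2 / ν) * 768 * (Lc ν T F B ^ 2 / ν))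

theorem Kc_pos {ν : ℝ} (hν : 0 < ν) (T F B : ℝ) : 0 < Kc ν T F B := by
  have := Lc_pos ν T F B
  unfold Kc
  positivity

theorem int3 {T : ℝ} (hT : T ∈ Icc (0:ℝ) T) {p q r : ℝ → ℝ} (hp : ContinuousOn p (Icc 0 T))
    (hq : ContinuousOn q (Icc 0 T)) (hr : ContinuousOn r (Icc 0 T)) (a b c : ℝ) :
    ∫ s in (0:ℝ)..T, (a * p s + b * q s + c * r s) =
      a * (∫ s in (0:ℝ)..T, p s) + b * (∫ s in (0:ℝ)..T, q s) + c * (∫ s in (0:ℝ)..T, r s) := by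
  have i1 : IntervalIntegrable (fun s => a * p s) volume 0 T := cont_intble hT (hp.const_mul _)
  have i2 : IntervalIntegrable (fun s => b * q s) volume 0 T := cont_intble hT (hq.const_mul _)
  have i3 : IntervalIntegrable (fun s => c * r s) volume 0 T := cont_intble hT (hr.const_mul _)
  have i12 : IntervalIntegrable (fun s => a * p s + b * q s) volume 0 T := i1.add i2
  rw [intervalIntegral.integral_add i12 i3, intervalIntegral.integral_add i1 i2,
    intervalIntegral.integral_const_mul, intervalIntegral.integral_const_mul,
    intervalIntegral.integral_const_mul]

theorem alg3 {ν a b c x y z w P : ℝ} (hν : 0 < ν)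
    (h1 : |P| ≤ (|a| * x + |b| * y + |c| * z) * w) :
    -(2 * P) ≤ ν / 2 * w ^ 2 + (6 / ν * a ^ 2 * x ^ 2 + 6 / ν * b ^ 2 * y ^ 2 +
      6 / ν * c ^ 2 * z ^ 2) := by
  set p := |a| * x with hp
  set q := |b| * y with hq
  set r := |c| * z with hr
  have ep : a ^ 2 * x ^ 2 = p ^ 2 := by rw [hp, mul_pow, sq_abs]
  have eq' : b ^ 2 * y ^ 2 = q ^ 2 := by rw [hq, mul_pow, sq_abs]
  have er : c ^ 2 * z ^ 2 = r ^ 2 := by rw [hr, mul_pow, sq_abs]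
  have h2 := neg_le_of_abs_le h1
  have h3 : 2 * ((p + q + r) * w) ≤ ν / 2 * w ^ 2 + 2 / ν * (p + q + r) ^ 2 := by
    have e : ν / 2 * w ^ 2 + 2 / ν * (p + q + r) ^ 2 - 2 * ((p + q + r) * w) =
        (ν * w - 2 * (p + q + r)) ^ 2 / (2 * ν) := by
      field_simp; ring
    have : 0 ≤ (ν * w - 2 * (p + q + r)) ^ 2 / (2 * ν) := by positivity
    linarith
  have h4 : 2 / ν * (p + q + r) ^ 2 ≤ 2 / ν * (3 * (p ^ 2 + q ^ 2 + r ^ 2)) := by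
    apply mul_le_mul_of_nonneg_left _ (by positivity)
    nlinarith [sq_nonneg (p - q), sq_nonneg (p - r), sq_nonneg (q - r)]
  have h5 : 6 / ν * a ^ 2 * x ^ 2 + 6 / ν * b ^ 2 * y ^ 2 + 6 / ν * c ^ 2 * z ^ 2 =
      2 / ν * (3 * (p ^ 2 + q ^ 2 + r ^ 2)) := by
    rw [← ep, ← eq', ← er]; ring
  linarith

theorem master {ν T B : ℝ} (hT : 0 ≤ T) (hν : 0 < ν) {f θ₀ : Coef} (hf : FinH 0 f)
    {u : Coef → ℝ → Coef} (hu : ∀ θ, MemH 1 θ → IsNSSol ν f T θ (u θ))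
    (hθ₀ : MemH 1 θ₀) (hB : hN 1 θ₀ ≤ B) {x y z : Coef} (hx : MemH 1 x) (hy : MemH 1 y)
    (hz : MemH 1 z) (a b c : ℝ) (hsum : a • (x - θ₀) + b • (y - θ₀) + c • (z - θ₀) = 0) :
    ∀ t ∈ Icc (0:ℝ) T,
      hN 0 (a • (u x t - u θ₀ t) + b • (u y t - u θ₀ t) + c • (u z t - u θ₀ t)) ≤
      Kc ν T (hN 0 f) B * (|a| * hN 0 (x - θ₀) ^ 2 + |b| * hN 0 (y - θ₀) ^ 2 +
        |c| * hN 0 (z - θ₀) ^ 2) := by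
  intro t ht
  set L := Lc ν T (hN 0 f) B with hL
  have hLp : 0 < L := Lc_pos _ _ _ _
  have hTm : T ∈ Icc (0:ℝ) T := ⟨hT, le_refl _⟩
  have h₀ := hu θ₀ hθ₀
  have t0 := h₀.traj hθ₀
  have Q : ∀ w, MemH 1 w → ContinuousOn
        (fun s => (16 * (hN 0 (u w s - u θ₀ s) * hN 1 (u w s - u θ₀ s))) ^ 2) (Icc 0 T) ∧
      ∫ s in (0:ℝ)..T, (16 * (hN 0 (u w s - u θ₀ s) * hN 1 (u w s - u θ₀ s))) ^ 2 ≤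
      256 * (L ^ 2 / ν) * hN 0 (w - θ₀) ^ 4 := by
    intro w hw
    have F := diff_forced hw hθ₀ (hu w hw) h₀
    have lip := lipschitz hT hν hf hw hθ₀ hB (hu w hw) h₀
    refine ⟨F.hc.pow 2, ?_⟩
    have h1 : ∫ s in (0:ℝ)..T, (16 * (hN 0 (u w s - u θ₀ s) * hN 1 (u w s - u θ₀ s))) ^ 2 ≤
        ∫ s in (0:ℝ)..T, (256 * (L * hN 0 (w - θ₀) ^ 2)) * hN 1 (u w s - u θ₀ s) ^ 2 := by
      apply intervalIntegral.integral_mono_on hT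
      · exact cont_intble hTm (F.hc.pow 2)
      · exact cont_intble hTm ((F.traj.contN1.pow 2).const_mul _)
      · intro s hs
        have h2 := lip s hs
        have h3 : 0 ≤ ν * ∫ r in (0:ℝ)..s, hN 1 (u w r - u θ₀ r) ^ 2 :=
          mul_nonneg hν.le (intervalIntegral.integral_nonneg hs.1 (fun _ _ => sq_nonneg _))
        have h4 : hN 0 (u w s - u θ₀ s) ^ 2 ≤ L * hN 0 (w - θ₀) ^ 2 := by linarith
        have h5 := mul_le_mul_of_nonneg_right h4 (sq_nonneg (hN 1 (u w s - u θ₀ s)))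
        calc _ = 256 * (hN 0 (u w s - u θ₀ s) ^ 2 * hN 1 (u w s - u θ₀ s) ^ 2) := by ring
          _ ≤ 256 * (L * hN 0 (w - θ₀) ^ 2 * hN 1 (u w s - u θ₀ s) ^ 2) := by linarith
          _ = _ := by ring
    rw [intervalIntegral.integral_const_mul] at h1
    have h2 := lip T hTm
    have h3 : ∫ s in (0:ℝ)..T, hN 1 (u w s - u θ₀ s) ^ 2 ≤ L * hN 0 (w - θ₀) ^ 2 / ν := by
      rw [le_div_iff₀ hν, mul_comm]
      have := sq_nonneg (hN 0 (u w T - u θ₀ T))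
      linarith
    refine h1.trans ((mul_le_mul_of_nonneg_left h3 (by positivity)).trans (le_of_eq ?_))
    ring
  obtain ⟨cx, qx⟩ := Q x hx
  obtain ⟨cy, qy⟩ := Q y hy
  obtain ⟨cz, qz⟩ := Q z hz
  have Fx := (diff_forced hx hθ₀ (hu x hx) h₀).smul a
  have Fy := (diff_forced hy hθ₀ (hu y hy) h₀).smul b
  have Fz := (diff_forced hz hθ₀ (hu z hz) h₀).smul c
  have F := (Fx.add t0 Fy).add t0 Fz
  set hx' : ℝ → ℝ := fun s => 16 * (hN 0 (u x s - u θ₀ s) * hN 1 (u x s - u θ₀ s)) with ehx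
  set hy' : ℝ → ℝ := fun s => 16 * (hN 0 (u y s - u θ₀ s) * hN 1 (u y s - u θ₀ s)) with ehy
  set hz' : ℝ → ℝ := fun s => 16 * (hN 0 (u z s - u θ₀ s) * hN 1 (u z s - u θ₀ s)) with ehz
  have cH : ContinuousOn (fun s => 6 / ν * a ^ 2 * hx' s ^ 2 + 6 / ν * b ^ 2 * hy' s ^ 2 +
      6 / ν * c ^ 2 * hz' s ^ 2) (Icc 0 T) :=
    ((cx.const_mul _).add (cy.const_mul _)).add (cz.const_mul _)
  have key := lin_est hT hν t0 F cH (fun s _ => by positivity) ?_ t ht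
  · have i0 : a • (u x 0 - u θ₀ 0) + b • (u y 0 - u θ₀ 0) + c • (u z 0 - u θ₀ 0) = 0 := by
      rw [(hu x hx).at_zero, (hu y hy).at_zero, (hu z hz).at_zero, h₀.at_zero, hsum]
    rw [i0, hN_zero] at key
    have e1 : ∫ s in (0:ℝ)..T, (6 / ν * a ^ 2 * hx' s ^ 2 + 6 / ν * b ^ 2 * hy' s ^ 2 +
        6 / ν * c ^ 2 * hz' s ^ 2) = 6 / ν * a ^ 2 * (∫ s in (0:ℝ)..T, hx' s ^ 2) +
        6 / ν * b ^ 2 * (∫ s in (0:ℝ)..T, hy' s ^ 2) +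
        6 / ν * c ^ 2 * (∫ s in (0:ℝ)..T, hz' s ^ 2) := by
      exact int3 hTm cx cy cz _ _ _
    rw [e1] at key
    have b1 : 6 / ν * a ^ 2 * (∫ s in (0:ℝ)..T, hx' s ^ 2) ≤
        6 / ν * a ^ 2 * (256 * (L ^ 2 / ν) * hN 0 (x - θ₀) ^ 4) :=
      mul_le_mul_of_nonneg_left qx (by positivity)
    have b2 : 6 / ν * b ^ 2 * (∫ s in (0:ℝ)..T, hy' s ^ 2) ≤
        6 / ν * b ^ 2 * (256 * (L ^ 2 / ν) * hN 0 (y - θ₀) ^ 4) :=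
      mul_le_mul_of_nonneg_left qy (by positivity)
    have b3 : 6 / ν * c ^ 2 * (∫ s in (0:ℝ)..T, hz' s ^ 2) ≤
        6 / ν * c ^ 2 * (256 * (L ^ 2 / ν) * hN 0 (z - θ₀) ^ 4) :=
      mul_le_mul_of_nonneg_left qz (by positivity)
    have hI : 0 ≤ ν * ∫ s in (0:ℝ)..t,
        hN 1 (a • (u x s - u θ₀ s) + b • (u y s - u θ₀ s) + c • (u z s - u θ₀ s)) ^ 2 :=
      mul_nonneg hν.le (intervalIntegral.integral_nonneg ht.1 (fun _ _ => sq_nonneg _))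
    set X := |a| * hN 0 (x - θ₀) ^ 2 with hX
    set Y := |b| * hN 0 (y - θ₀) ^ 2 with hY
    set Z := |c| * hN 0 (z - θ₀) ^ 2 with hZ
    have hX0 : 0 ≤ X := by positivity
    have hY0 : 0 ≤ Y := by positivity
    have hZ0 : 0 ≤ Z := by positivity
    have eX : a ^ 2 * hN 0 (x - θ₀) ^ 4 = X ^ 2 := by
      rw [hX, mul_pow, sq_abs]; ring
    have eY : b ^ 2 * hN 0 (y - θ₀) ^ 4 = Y ^ 2 := by
      rw [hY, mul_pow, sq_abs]; ring
    have eZ : c ^ 2 * hN 0 (z - θ₀) ^ 4 = Z ^ 2 := by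
      rw [hZ, mul_pow, sq_abs]; ring
    apply abs_le_of_sq_le_sq' _ (mul_nonneg (Kc_pos hν _ _ _).le (by positivity)) |>.2
    have hsq : X ^ 2 + Y ^ 2 + Z ^ 2 ≤ (X + Y + Z) ^ 2 := by
      nlinarith [mul_nonneg hX0 hY0, mul_nonneg hX0 hZ0, mul_nonneg hY0 hZ0]
    have hexp := exp_le_Lc hT hν hf hθ₀ hB h₀
    rw [← hL] at hexp
    have eK : Kc ν T (hN 0 f) B ^ 2 = L * (2 / ν) * 768 * (L ^ 2 / ν) := by
      unfold Kc
      rw [Real.sq_sqrt (by positivity)]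
    rw [mul_pow, eK]
    have hS : 6 / ν * a ^ 2 * (256 * (L ^ 2 / ν) * hN 0 (x - θ₀) ^ 4) +
        6 / ν * b ^ 2 * (256 * (L ^ 2 / ν) * hN 0 (y - θ₀) ^ 4) +
        6 / ν * c ^ 2 * (256 * (L ^ 2 / ν) * hN 0 (z - θ₀) ^ 4) =
        (2 / ν) * 768 * (L ^ 2 / ν) * (X ^ 2 + Y ^ 2 + Z ^ 2) := by
      rw [← eX, ← eY, ← eZ]; ring
    calc _ ≤ Real.exp (512 / ν * ∫ s in (0:ℝ)..T, hN 1 (u θ₀ s) ^ 2) *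
          (0 ^ 2 + (6 / ν * a ^ 2 * (∫ s in (0:ℝ)..T, hx' s ^ 2) +
        6 / ν * b ^ 2 * (∫ s in (0:ℝ)..T, hy' s ^ 2) +
        6 / ν * c ^ 2 * (∫ s in (0:ℝ)..T, hz' s ^ 2))) := by linarith
      _ ≤ Real.exp (512 / ν * ∫ s in (0:ℝ)..T, hN 1 (u θ₀ s) ^ 2) *
          ((2 / ν) * 768 * (L ^ 2 / ν) * (X ^ 2 + Y ^ 2 + Z ^ 2)) :=
        mul_le_mul_of_nonneg_left (by linarith) (Real.exp_pos _).le
      _ ≤ L * ((2 / ν) * 768 * (L ^ 2 / ν) * (X ^ 2 + Y ^ 2 + Z ^ 2)) :=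
        mul_le_mul_of_nonneg_right hexp (by positivity)
      _ ≤ L * ((2 / ν) * 768 * (L ^ 2 / ν) * (X + Y + Z) ^ 2) := by gcongr
      _ = _ := by ring
  · intro s hs
    have h1 := F.le s hs _ (F.traj.fin s hs)
    exact alg3 hν h1

end

section

open Filter Topology

structure Ctx (ν T : ℝ) (f : Coef) (u : Coef → ℝ → Coef) (θ₀ : Coef) : Prop where
  hT : 0 ≤ T
  hν : 0 < ν
  hf : FinH 0 f
  hu : ∀ θ, MemH 1 θ → IsNSSol ν f T θ (u θ)
  hθ : MemH 1 θ₀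

/-- Difference quotients. -/
def Wq (u : Coef → ℝ → Coef) (θ₀ : Coef) (h t : ℝ) (ξ : Coef) : Coef :=
  h⁻¹ • (u (θ₀ + h • ξ) t - u θ₀ t)

/-- The step sizes. -/
def hn (n : ℕ) : ℝ := 1 / ((n : ℝ) + 1)

theorem hn_pos (n : ℕ) : 0 < hn n := Nat.one_div_pos_of_nat

theorem hn_tendsto : Tendsto hn atTop (𝓝 0) := tendsto_one_div_add_atTop_nhds_zero_nat

theorem hn_anti {m n : ℕ} (h : m ≤ n) : hn n ≤ hn m := Nat.one_div_le_one_div h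

/-- The directional derivative. -/
def Vd (u : Coef → ℝ → Coef) (θ₀ : Coef) (t : ℝ) (ξ : Coef) : Coef := fun k =>
  limUnder atTop (fun n => Wq u θ₀ (hn n) t ξ k)

variable {ν T : ℝ} {f : Coef} {u : Coef → ℝ → Coef} {θ₀ : Coef}

theorem Ctx.shift (C : Ctx ν T f u θ₀) {ξ : Coef} (hξ : MemH 1 ξ) (h : ℝ) :
    MemH 1 (θ₀ + h • ξ) := C.hθ.add (hξ.smul h)

theorem Ctx.finU (C : Ctx ν T f u θ₀) {θ : Coef} (hθ : MemH 1 θ) {t : ℝ} (ht : t ∈ Icc (0:ℝ) T) :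
    FinH 0 (u θ t) := ((C.hu θ hθ).traj hθ).fin0 t ht

theorem Ctx.finW (C : Ctx ν T f u θ₀) {ξ : Coef} (hξ : MemH 1 ξ) (h : ℝ) {t : ℝ}
    (ht : t ∈ Icc (0:ℝ) T) : FinH 0 (Wq u θ₀ h t ξ) :=
  ((C.finU (C.shift hξ h) ht).sub (C.finU C.hθ ht)).smul _

/-- Constant depending only on the base point. -/
def KB (ν T : ℝ) (f θ₀ : Coef) : ℝ := Kc ν T (hN 0 f) (hN 1 θ₀)

theorem norm_shift (θ₀ ξ : Coef) (h : ℝ) : hN 0 (θ₀ + h • ξ - θ₀) = |h| * hN 0 ξ := by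
  rw [add_sub_cancel_left, hN_smul]

theorem abs_inv_mul_sq {h : ℝ} (hh : h ≠ 0) (x : ℝ) : |h⁻¹| * (|h| * x) ^ 2 = |h| * x ^ 2 := by
  rw [abs_inv]
  have : |h| ≠ 0 := abs_ne_zero.mpr hh
  field_simp

theorem Ctx.W_diff (C : Ctx ν T f u θ₀) {B : ℝ} (hB : hN 1 θ₀ ≤ B) {ξ : Coef} (hξ : MemH 1 ξ)
    {h g : ℝ} (hh : h ≠ 0) (hg : g ≠ 0) {t : ℝ} (ht : t ∈ Icc (0:ℝ) T) :
    hN 0 (Wq u θ₀ h t ξ - Wq u θ₀ g t ξ) ≤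
      Kc ν T (hN 0 f) B * ((|h| + |g|) * hN 0 ξ ^ 2) := by
  have := master C.hT C.hν C.hf C.hu C.hθ hB (C.shift hξ h) (C.shift hξ g) C.hθ
    h⁻¹ (-g⁻¹) 0 (by
      rw [add_sub_cancel_left, add_sub_cancel_left, smul_smul, neg_smul, smul_smul,
        inv_mul_cancel₀ hh, inv_mul_cancel₀ hg]; simp) t ht
  rw [norm_shift, norm_shift, abs_neg, abs_inv_mul_sq hh, abs_inv_mul_sq hg, abs_zero, zero_mul,
    add_zero, zero_smul, add_zero, neg_smul, ← sub_eq_add_neg, ← add_mul] at this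
  exact this

theorem Ctx.V_tendsto (C : Ctx ν T f u θ₀) {ξ : Coef} (hξ : MemH 1 ξ)
    {t : ℝ} (ht : t ∈ Icc (0:ℝ) T) (k : Freq) :
    Tendsto (fun n => Wq u θ₀ (hn n) t ξ k) atTop (𝓝 (Vd u θ₀ t ξ k)) := by
  have hc : CauchySeq (fun n => Wq u θ₀ (hn n) t ξ k) := by
    apply cauchySeq_of_le_tendsto_0
      (fun N => Kc ν T (hN 0 f) (hN 1 θ₀) * ((hn N + hn N) * hN 0 ξ ^ 2))
    · intro n m N hNn hNm
      rw [dist_eq_norm]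
      have h1 := norm_le_hN0 ((C.finW hξ (hn n) ht).sub (C.finW hξ (hn m) ht)) k
      refine h1.trans ((C.W_diff le_rfl hξ (hn_pos n).ne' (hn_pos m).ne' ht).trans ?_)
      apply mul_le_mul_of_nonneg_left _ (Kc_pos C.hν _ _ _).le
      apply mul_le_mul_of_nonneg_right _ (sq_nonneg _)
      rw [abs_of_pos (hn_pos n), abs_of_pos (hn_pos m)]
      exact add_le_add (hn_anti hNn) (hn_anti hNm)
    · simpa using ((hn_tendsto.add hn_tendsto).mul_const (hN 0 ξ ^ 2)).const_mul
        (Kc ν T (hN 0 f) (hN 1 θ₀))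
  exact hc.tendsto_limUnder

theorem Ctx.W_V (C : Ctx ν T f u θ₀) {B : ℝ} (hB : hN 1 θ₀ ≤ B) {ξ : Coef} (hξ : MemH 1 ξ)
    {h : ℝ} (hh : h ≠ 0) {t : ℝ} (ht : t ∈ Icc (0:ℝ) T) :
    FinH 0 (Wq u θ₀ h t ξ - Vd u θ₀ t ξ) ∧ hN 0 (Wq u θ₀ h t ξ - Vd u θ₀ t ξ) ≤
      2 * Kc ν T (hN 0 f) B * |h| * hN 0 ξ ^ 2 := by
  have hK := (Kc_pos C.hν T (hN 0 f) B).le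
  apply fatou (c := fun n => Wq u θ₀ h t ξ - Wq u θ₀ (hn n) t ξ)
  · positivity
  · intro n
    exact (C.finW hξ h ht).sub (C.finW hξ _ ht)
  · have : ∀ᶠ n in atTop, hn n < |h| := hn_tendsto.eventually_lt_const (abs_pos.mpr hh)
    filter_upwards [this] with n hn'
    refine (C.W_diff hB hξ hh (hn_pos n).ne' ht).trans ?_
    rw [abs_of_pos (hn_pos n)]
    have h1 : (|h| + hn n) * hN 0 ξ ^ 2 ≤ (2 * |h|) * hN 0 ξ ^ 2 :=
      mul_le_mul_of_nonneg_right (by linarith) (sq_nonneg _)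
    refine (mul_le_mul_of_nonneg_left h1 hK).trans (le_of_eq (by ring))
  · intro k
    exact (C.V_tendsto hξ ht k).const_sub _

theorem Ctx.finV (C : Ctx ν T f u θ₀) {ξ : Coef} (hξ : MemH 1 ξ) {t : ℝ}
    (ht : t ∈ Icc (0:ℝ) T) : FinH 0 (Vd u θ₀ t ξ) := by
  have := (C.finW hξ 1 ht).sub (C.W_V le_rfl hξ one_ne_zero ht).1
  simpa using this

theorem Ctx.lip (C : Ctx ν T f u θ₀) {ξ : Coef} (hξ : MemH 1 ξ) (h : ℝ) {t : ℝ}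
    (ht : t ∈ Icc (0:ℝ) T) : hN 0 (u (θ₀ + h • ξ) t - u θ₀ t) ≤
      √(Lc ν T (hN 0 f) (hN 1 θ₀)) * (|h| * hN 0 ξ) := by
  have h1 := lipschitz C.hT C.hν C.hf (C.shift hξ h) C.hθ le_rfl (C.hu _ (C.shift hξ h))
    (C.hu _ C.hθ) t ht
  have hI : 0 ≤ ν * ∫ s in (0:ℝ)..t, hN 1 (u (θ₀ + h • ξ) s - u θ₀ s) ^ 2 :=
      mul_nonneg C.hν.le (intervalIntegral.integral_nonneg ht.1 (fun _ _ => sq_nonneg _))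
  rw [norm_shift] at h1
  have hx := hN_nonneg 0 ξ
  apply abs_le_of_sq_le_sq' _ (by positivity) |>.2
  rw [mul_pow, Real.sq_sqrt (Lc_pos _ _ _ _).le]
  linarith

theorem Ctx.V_bound (C : Ctx ν T f u θ₀) {ξ : Coef} (hξ : MemH 1 ξ) {t : ℝ}
    (ht : t ∈ Icc (0:ℝ) T) : hN 0 (Vd u θ₀ t ξ) ≤
      √(Lc ν T (hN 0 f) (hN 1 θ₀)) * hN 0 ξ := by
  have hx := hN_nonneg 0 ξ
  refine (fatou (c := fun n => Wq u θ₀ (hn n) t ξ) (by positivity)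
    (fun n => C.finW hξ _ ht) (Eventually.of_forall fun n => ?_) (C.V_tendsto hξ ht)).2
  have h1 := C.lip hξ (hn n) ht
  unfold Wq
  rw [hN_smul, abs_of_pos (inv_pos.mpr (hn_pos n))]
  rw [abs_of_pos (hn_pos n)] at h1
  have h2 := mul_le_mul_of_nonneg_left h1 (inv_pos.mpr (hn_pos n)).le
  refine h2.trans (le_of_eq ?_)
  have := (hn_pos n).ne'
  field_simp

theorem Ctx.V_real (C : Ctx ν T f u θ₀) {ξ : Coef} (hξ : MemH 1 ξ) {t : ℝ}
    (ht : t ∈ Icc (0:ℝ) T) : IsReal (Vd u θ₀ t ξ) := by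
  intro k
  have h1 := C.V_tendsto hξ ht (fneg k)
  have h2 := (Complex.continuous_conj.tendsto _).comp (C.V_tendsto hξ ht k)
  refine tendsto_nhds_unique h1 (h2.neg.congr fun n => ?_)
  have hr : IsReal (Wq u θ₀ (hn n) t ξ) :=
    (((C.hu _ (C.shift hξ (hn n))).real t ht).sub ((C.hu _ C.hθ).real t ht)).smul _
  exact (hr k).symm

theorem Ctx.V_zero (C : Ctx ν T f u θ₀) {ξ : Coef} (hξ : MemH 1 ξ) : Vd u θ₀ 0 ξ = ξ := by
  funext k
  have h1 := C.V_tendsto hξ (t := 0) ⟨le_refl _, C.hT⟩ k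
  refine tendsto_nhds_unique h1 (tendsto_const_nhds.congr fun n => ?_)
  unfold Wq
  rw [(C.hu _ (C.shift hξ (hn n))).at_zero, (C.hu _ C.hθ).at_zero, add_sub_cancel_left, smul_smul,
    inv_mul_cancel₀ (hn_pos n).ne', one_smul]

theorem tendsto_zero_mode {c : ℕ → Coef} {b : ℕ → ℝ} (hc : ∀ n, FinH 0 (c n))
    (hb : ∀ n, hN 0 (c n) ≤ b n) (h0 : Tendsto b atTop (𝓝 0)) (k : Freq) :
    Tendsto (fun n => c n k) atTop (𝓝 0) := by
  rw [tendsto_zero_iff_norm_tendsto_zero]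
  exact squeeze_zero (fun _ => norm_nonneg _) (fun n => (norm_le_hN0 (hc n) k).trans (hb n)) h0

theorem Ctx.V_add (C : Ctx ν T f u θ₀) {ξ η : Coef} (hξ : MemH 1 ξ) (hη : MemH 1 η) {t : ℝ}
    (ht : t ∈ Icc (0:ℝ) T) : Vd u θ₀ t (ξ + η) = Vd u θ₀ t ξ + Vd u θ₀ t η := by
  funext k
  have h1 := C.V_tendsto (hξ.add hη) ht k
  have h2 := C.V_tendsto hξ ht k
  have h3 := C.V_tendsto hη ht k
  have h4 := (h1.sub h2).sub h3
  have h5 : Tendsto (fun n => (Wq u θ₀ (hn n) t (ξ + η) - Wq u θ₀ (hn n) t ξ -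
      Wq u θ₀ (hn n) t η) k) atTop (𝓝 0) := by
    apply tendsto_zero_mode (b := fun n => Kc ν T (hN 0 f) (hN 1 θ₀) *
      (hn n * (hN 0 (ξ + η) ^ 2 + hN 0 ξ ^ 2 + hN 0 η ^ 2)))
      (c := fun n => Wq u θ₀ (hn n) t (ξ + η) - Wq u θ₀ (hn n) t ξ - Wq u θ₀ (hn n) t η)
    · intro n
      exact ((C.finW (hξ.add hη) _ ht).sub (C.finW hξ _ ht)).sub (C.finW hη _ ht)
    · intro n
      have hne := (hn_pos n).ne'
      have := master C.hT C.hν C.hf C.hu C.hθ le_rfl (C.shift (hξ.add hη) (hn n))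
        (C.shift hξ (hn n)) (C.shift hη (hn n)) (hn n)⁻¹ (-(hn n)⁻¹) (-(hn n)⁻¹) (by
        rw [add_sub_cancel_left, add_sub_cancel_left, add_sub_cancel_left, smul_smul, neg_smul,
          smul_smul, neg_smul, smul_smul, inv_mul_cancel₀ hne]; simp) t ht
      rw [norm_shift, norm_shift, norm_shift, abs_neg, abs_inv_mul_sq hne, abs_inv_mul_sq hne,
        abs_inv_mul_sq hne, neg_smul, ← sub_eq_add_neg, neg_smul, ← sub_eq_add_neg,
        ← mul_add, ← mul_add, abs_of_pos (hn_pos n)] at this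
      exact this
    · simpa using (hn_tendsto.mul_const _).const_mul (Kc ν T (hN 0 f) (hN 1 θ₀))
  have h6 := tendsto_nhds_unique h4 h5
  rw [Pi.add_apply]
  linear_combination h6

theorem Ctx.V_smul (C : Ctx ν T f u θ₀) {ξ : Coef} (hξ : MemH 1 ξ) (r : ℝ) {t : ℝ}
    (ht : t ∈ Icc (0:ℝ) T) : Vd u θ₀ t (r • ξ) = r • Vd u θ₀ t ξ := by
  funext k
  have h1 := C.V_tendsto (hξ.smul r) ht k
  have h2 := (C.V_tendsto hξ ht k).const_smul r
  have h4 := h1.sub h2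
  have h5 : Tendsto (fun n => (Wq u θ₀ (hn n) t (r • ξ) - r • Wq u θ₀ (hn n) t ξ) k)
      atTop (𝓝 0) := by
    apply tendsto_zero_mode (b := fun n => Kc ν T (hN 0 f) (hN 1 θ₀) *
      (hn n * (hN 0 (r • ξ) ^ 2 + |r| * hN 0 ξ ^ 2)))
      (c := fun n => Wq u θ₀ (hn n) t (r • ξ) - r • Wq u θ₀ (hn n) t ξ)
    · intro n
      exact (C.finW (hξ.smul r) _ ht).sub ((C.finW hξ _ ht).smul r)
    · intro n
      have hne := (hn_pos n).ne'
      have := master C.hT C.hν C.hf C.hu C.hθ le_rfl (C.shift (hξ.smul r) (hn n))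
        (C.shift hξ (hn n)) C.hθ (hn n)⁻¹ (-(r * (hn n)⁻¹)) 0 (by
        simp only [add_sub_cancel_left, smul_smul, zero_smul, add_zero, ← add_smul]
        rw [show (hn n)⁻¹ * (hn n * r) + -(r * (hn n)⁻¹) * hn n = 0 by field_simp; ring,
          zero_smul]) t ht
      rw [norm_shift, norm_shift, abs_neg, abs_inv_mul_sq hne, abs_mul, mul_assoc |r|,
        abs_inv_mul_sq hne, abs_zero, zero_mul, zero_smul, add_zero, add_zero,
        neg_smul, ← sub_eq_add_neg, mul_smul, abs_of_pos (hn_pos n)] at this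
      refine this.trans (le_of_eq ?_)
      ring
    · simpa using (hn_tendsto.mul_const _).const_mul (Kc ν T (hN 0 f) (hN 1 θ₀))
  have h6 := tendsto_nhds_unique h4 h5
  rw [Pi.smul_apply]
  exact sub_eq_zero.mp h6

/-- Right-hand side of the linearised equation. -/
def Gd (ν : ℝ) (u : Coef → ℝ → Coef) (θ₀ ξ : Coef) (k : Freq) (t : ℝ) : ℂ :=
  -(Bc (u θ₀ t) (Vd u θ₀ t ξ) k + Bc (Vd u θ₀ t ξ) (u θ₀ t) k) -
    ((ν * lam k : ℝ) : ℂ) * Vd u θ₀ t ξ k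

/-- Time derivative of the difference quotients. -/
def gd (ν : ℝ) (u : Coef → ℝ → Coef) (θ₀ ξ : Coef) (k : Freq) (n : ℕ) (t : ℝ) : ℂ :=
  -(Bc (u θ₀ t) (Wq u θ₀ (hn n) t ξ) k + Bc (Wq u θ₀ (hn n) t ξ) (u θ₀ t) k +
    ((hn n)⁻¹ • Bc (u (θ₀ + hn n • ξ) t - u θ₀ t) (u (θ₀ + hn n • ξ) t - u θ₀ t)) k) -
    ((ν * lam k : ℝ) : ℂ) * Wq u θ₀ (hn n) t ξ k

theorem Ctx.forced (C : Ctx ν T f u θ₀) {ξ : Coef} (hξ : MemH 1 ξ) (n : ℕ) :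
    LinForced ν T (u θ₀) (fun t => Wq u θ₀ (hn n) t ξ)
      (fun t => (hn n)⁻¹ • Bc (u (θ₀ + hn n • ξ) t - u θ₀ t) (u (θ₀ + hn n • ξ) t - u θ₀ t))
      (fun t => |(hn n)⁻¹| * (16 * (hN 0 (u (θ₀ + hn n • ξ) t - u θ₀ t) *
        hN 1 (u (θ₀ + hn n • ξ) t - u θ₀ t)))) :=
  (diff_forced (C.shift hξ (hn n)) C.hθ (C.hu _ (C.shift hξ (hn n))) (C.hu _ C.hθ)).smul (hn n)⁻¹

theorem Ctx.gd_cont (C : Ctx ν T f u θ₀) {ξ : Coef} (hξ : MemH 1 ξ) (n : ℕ) (k : Freq) :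
    ContinuousOn (gd ν u θ₀ ξ k n) (Icc 0 T) := by
  have F := C.forced hξ n
  have t0 := (C.hu _ C.hθ).traj C.hθ
  exact ((((t0.contBc F.traj k).add (F.traj.contBc t0 k)).add ((F.good _ t0).cont k)).neg).sub
    ((F.traj.contMode k).const_mul _)

theorem Ctx.gd_int (C : Ctx ν T f u θ₀) {ξ : Coef} (hξ : MemH 1 ξ) (n : ℕ) (k : Freq) {t : ℝ}
    (ht : t ∈ Icc (0:ℝ) T) :
    ∫ s in (0:ℝ)..t, gd ν u θ₀ ξ k n s = Wq u θ₀ (hn n) t ξ k - ξ k := by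
  have F := C.forced hξ n
  have e0 : Wq u θ₀ (hn n) 0 ξ k = ξ k := by
    unfold Wq
    rw [(C.hu _ (C.shift hξ (hn n))).at_zero, (C.hu _ C.hθ).at_zero, add_sub_cancel_left, smul_smul,
      inv_mul_cancel₀ (hn_pos n).ne', one_smul]
  rw [← e0]
  apply intervalIntegral.integral_eq_sub_of_hasDerivAt_of_le ht.1
    (f := fun s => Wq u θ₀ (hn n) s ξ k)
  · exact (F.traj.contMode k).mono (Icc_subset_Icc_right ht.2)
  · intro s hs
    exact F.der k s ⟨hs.1, hs.2.le.trans ht.2⟩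
  · exact cont_intble ht (C.gd_cont hξ n k)

theorem Ctx.gd_close (C : Ctx ν T f u θ₀) {ξ : Coef} (hξ : MemH 1 ξ) (k : Freq) :
    ∃ M, 0 ≤ M ∧ ∀ n, ∀ t ∈ Icc (0:ℝ) T, ‖gd ν u θ₀ ξ k n t - Gd ν u θ₀ ξ k t‖ ≤ M * hn n := by
  have t0 := (C.hu _ C.hθ).traj C.hθ
  obtain ⟨M0, hM0, hM⟩ := bdd_on t0.contN0
  set K := 2 * Kc ν T (hN 0 f) (hN 1 θ₀) * hN 0 ξ ^ 2 with hK
  set L := √(Lc ν T (hN 0 f) (hN 1 θ₀)) with hL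
  set P := 2 * Real.pi * nz k.1 with hP
  have hKp : 0 ≤ K := mul_nonneg (mul_nonneg zero_le_two (Kc_pos C.hν _ _ _).le) (sq_nonneg _)
  have hPp : 0 ≤ P := mul_nonneg (by positivity) (nz_nonneg _)
  have hνl : 0 ≤ ν * lam k := mul_nonneg C.hν.le (lam_pos k).le
  have hx := hN_nonneg 0 ξ
  refine ⟨P * (M0 * K) + P * (K * M0) + P * (L * hN 0 ξ) ^ 2 + ν * lam k * K, by positivity,
    fun n t ht => ?_⟩
  have hp := hn_pos n
  obtain ⟨fWV, nWV⟩ := C.W_V le_rfl hξ hp.ne' ht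
  have nWV' : hN 0 (Wq u θ₀ (hn n) t ξ - Vd u θ₀ t ξ) ≤ K * hn n := by
    refine nWV.trans (le_of_eq ?_)
    rw [abs_of_pos hp, hK]; ring
  have a := t0.fin0 t ht
  have b := C.finW hξ (hn n) ht
  have c := C.finV hξ ht
  have d := (C.finU (C.shift hξ (hn n)) ht).sub a
  have hm : hN 0 (u θ₀ t) ≤ M0 := hM t ht
  have hm0 := hN_nonneg 0 (u θ₀ t)
  have e : gd ν u θ₀ ξ k n t - Gd ν u θ₀ ξ k t =
      -(Bc (u θ₀ t) (Wq u θ₀ (hn n) t ξ - Vd u θ₀ t ξ) k +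
        Bc (Wq u θ₀ (hn n) t ξ - Vd u θ₀ t ξ) (u θ₀ t) k +
        ((hn n)⁻¹ • Bc (u (θ₀ + hn n • ξ) t - u θ₀ t) (u (θ₀ + hn n • ξ) t - u θ₀ t)) k) -
      ((ν * lam k : ℝ) : ℂ) * (Wq u θ₀ (hn n) t ξ - Vd u θ₀ t ξ) k := by
    rw [Bc_sub_right a b c, Bc_sub_left b c a]
    simp only [gd, Gd, Pi.sub_apply]
    ring
  have b1 : ‖Bc (u θ₀ t) (Wq u θ₀ (hn n) t ξ - Vd u θ₀ t ξ) k‖ ≤ P * (M0 * (K * hn n)) := by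
    refine (Bc_norm_le a fWV k).trans (mul_le_mul_of_nonneg_left ?_ hPp)
    exact mul_le_mul hm nWV' (hN_nonneg _ _) hM0
  have b2 : ‖Bc (Wq u θ₀ (hn n) t ξ - Vd u θ₀ t ξ) (u θ₀ t) k‖ ≤ P * ((K * hn n) * M0) := by
    refine (Bc_norm_le fWV a k).trans (mul_le_mul_of_nonneg_left ?_ hPp)
    exact mul_le_mul nWV' hm (hN_nonneg _ _) (by positivity)
  have b3 : ‖((hn n)⁻¹ • Bc (u (θ₀ + hn n • ξ) t - u θ₀ t) (u (θ₀ + hn n • ξ) t - u θ₀ t)) k‖ ≤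
      P * (L * hN 0 ξ) ^ 2 * hn n := by
    rw [Pi.smul_apply, norm_smul, Real.norm_eq_abs, abs_of_pos (inv_pos.mpr hp)]
    have l1 := C.lip hξ (hn n) ht
    rw [abs_of_pos hp] at l1
    have l2 := (Bc_norm_le d d k).trans (mul_le_mul_of_nonneg_left
      (mul_le_mul l1 l1 (hN_nonneg _ _) (by positivity)) hPp)
    refine (mul_le_mul_of_nonneg_left l2 (inv_pos.mpr hp).le).trans (le_of_eq ?_)
    rw [← hL, ← hP]
    field_simp
  have b4 : ‖((ν * lam k : ℝ) : ℂ) * (Wq u θ₀ (hn n) t ξ - Vd u θ₀ t ξ) k‖ ≤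
      ν * lam k * (K * hn n) := by
    rw [norm_mul, Complex.norm_real, Real.norm_eq_abs, abs_of_nonneg hνl]
    exact mul_le_mul_of_nonneg_left ((norm_le_hN0 fWV k).trans nWV') hνl
  rw [e]
  refine (norm_sub_le _ _).trans ?_
  rw [norm_neg]
  have t1 := norm_add₃_le (a := Bc (u θ₀ t) (Wq u θ₀ (hn n) t ξ - Vd u θ₀ t ξ) k)
    (b := Bc (Wq u θ₀ (hn n) t ξ - Vd u θ₀ t ξ) (u θ₀ t) k)
    (c := ((hn n)⁻¹ • Bc (u (θ₀ + hn n • ξ) t - u θ₀ t) (u (θ₀ + hn n • ξ) t - u θ₀ t)) k)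
  refine (add_le_add (t1.trans (add_le_add (add_le_add b1 b2) b3)) b4).trans (le_of_eq ?_)
  ring

theorem Ctx.Gd_cont (C : Ctx ν T f u θ₀) {ξ : Coef} (hξ : MemH 1 ξ) (k : Freq) :
    ContinuousOn (Gd ν u θ₀ ξ k) (Icc 0 T) := by
  obtain ⟨M, hM0, hM⟩ := C.gd_close hξ k
  have hu : TendstoUniformlyOn (gd ν u θ₀ ξ k) (Gd ν u θ₀ ξ k) atTop (Icc 0 T) := by
    rw [Metric.tendstoUniformlyOn_iff]
    intro ε hε
    have h1 : Tendsto (fun n => M * hn n) atTop (𝓝 0) := by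
      simpa using hn_tendsto.const_mul M
    filter_upwards [h1.eventually_lt_const hε] with n hn' t ht
    rw [dist_comm, dist_eq_norm]
    exact (hM n t ht).trans_lt hn'
  exact hu.continuousOn (Eventually.of_forall fun n => C.gd_cont hξ n k).frequently

theorem Ctx.V_int (C : Ctx ν T f u θ₀) {ξ : Coef} (hξ : MemH 1 ξ) (k : Freq) {t : ℝ}
    (ht : t ∈ Icc (0:ℝ) T) :
    Vd u θ₀ t ξ k = ξ k + ∫ s in (0:ℝ)..t, Gd ν u θ₀ ξ k s := by
  obtain ⟨M, hM0, hM⟩ := C.gd_close hξ k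
  have h1 : Tendsto (fun n => ∫ s in (0:ℝ)..t, gd ν u θ₀ ξ k n s) atTop
      (𝓝 (∫ s in (0:ℝ)..t, Gd ν u θ₀ ξ k s)) := by
    rw [tendsto_iff_norm_sub_tendsto_zero]
    have h2 : Tendsto (fun n => M * hn n * |t - 0|) atTop (𝓝 0) := by
      simpa using (hn_tendsto.const_mul M).mul_const |t - 0|
    refine squeeze_zero (fun _ => norm_nonneg _) (fun n => ?_) h2
    rw [← intervalIntegral.integral_sub (cont_intble ht (C.gd_cont hξ n k))
      (cont_intble ht (C.Gd_cont hξ k))]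
    apply intervalIntegral.norm_integral_le_of_norm_le_const
    intro s hs
    rw [uIoc_of_le ht.1] at hs
    exact hM n s ⟨hs.1.le, hs.2.trans ht.2⟩
  have h3 := (C.V_tendsto hξ ht k).sub_const (ξ k)
  have h4 := tendsto_nhds_unique h3 (h1.congr fun n => C.gd_int hξ n k ht)
  linear_combination h4

theorem Ctx.V_ext (C : Ctx ν T f u θ₀) {ξ : Coef} (hξ : MemH 1 ξ) (k : Freq) :
    ∃ E : ℝ → ℂ, (∀ t ∈ Icc (0:ℝ) T, E t = Vd u θ₀ t ξ k) ∧
      ∀ t ∈ Ioc (0:ℝ) T, HasDerivAt E (Gd ν u θ₀ ξ k t) t := by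
  obtain ⟨G, cG, eG, -⟩ := exists_cont_ext C.hT (C.Gd_cont hξ k)
  refine ⟨fun t => ξ k + ∫ s in (0:ℝ)..t, G s, fun t ht => ?_, fun t ht => ?_⟩
  · show ξ k + ∫ s in (0:ℝ)..t, G s = _
    rw [C.V_int hξ k ht, integral_congr_Icc ht eG]
  · rw [← eG t (Ioc_subset_Icc_self ht)]
    exact (cG.integral_hasStrictDerivAt 0 t).hasDerivAt.const_add _

end

section

open Filter Topology

theorem lam_finite (N : ℝ) : {k : Freq | lam k < N}.Finite := by
  have hfin : (Icc ((-⌈N⌉, -⌈N⌉) : ℤ × ℤ) (⌈N⌉, ⌈N⌉)).Finite := Set.finite_Icc _ _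
  have key : ∀ (a : ℤ), (a : ℝ) ^ 2 < N → -⌈N⌉ ≤ a ∧ a ≤ ⌈N⌉ := by
    intro a ha
    rw [← abs_le]
    have h1 : (|a| : ℤ) ≤ a ^ 2 := by
      rw [← sq_abs]
      rcases eq_or_lt_of_le (abs_nonneg a) with h | h
      · rw [← h]; norm_num
      · nlinarith
    have h2 : ((a ^ 2 : ℤ) : ℝ) ≤ ⌈N⌉ := by
      push_cast
      exact ha.le.trans (Int.le_ceil N)
    exact h1.trans (by exact_mod_cast h2)
  refine (hfin.preimage (f := fun k : Freq => k.1) (Subtype.val_injective.injOn)).subset ?_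
  intro k hk
  have h1 := lam_ge k
  have hk' : lam k < N := hk
  unfold knormSq at h1
  have h2 := sq_nonneg (k.1.1 : ℝ)
  have h3 := sq_nonneg (k.1.2 : ℝ)
  have a := key k.1.1 (by linarith)
  have b := key k.1.2 (by linarith)
  exact ⟨⟨a.1, b.1⟩, ⟨a.2, b.2⟩⟩

theorem ball_net {ε : ℝ} (hε : 0 < ε) : ∃ S : Finset Coef, (∀ s ∈ S, MemH 1 s) ∧
    ∀ c, MemH 1 c → hN 1 c ≤ 1 → ∃ s ∈ S, hN 0 (c - s) < ε := by
  classical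
  set N : ℝ := 16 / ε ^ 2 with hN'
  have hNp : 0 < N := by positivity
  set F : Finset Freq := (lam_finite N).toFinset with hF
  set ρ : Coef → (F → ℂ) := fun c k => c k with hρ
  set Ball : Set Coef := {c | MemH 1 c ∧ hN 1 c ≤ 1} with hBall
  have htb : TotallyBounded (ρ '' Ball) := by
    apply TotallyBounded.subset _ (isCompact_closedBall (0 : F → ℂ) 1).totallyBounded
    rintro _ ⟨c, hc, rfl⟩
    rw [mem_closedBall_zero_iff, pi_norm_le_iff_of_nonneg zero_le_one]
    intro k
    have h1 := hc.1.2.zero_of_one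
    exact (norm_le_hN0 h1.1 k).trans (h1.2.trans hc.2)
  set δ : ℝ := ε / (2 * ((F.card : ℝ) + 1)) with hδ
  have hδp : 0 < δ := by positivity
  obtain ⟨t, hts, htf, hcov⟩ := Metric.finite_approx_of_totallyBounded htb δ hδp
  have hch : ∀ y : F → ℂ, ∃ c, y ∈ t → c ∈ Ball ∧ ρ c = y := by
    intro y
    by_cases hy : y ∈ t
    · obtain ⟨c, hc, e⟩ := hts hy
      exact ⟨c, fun _ => ⟨hc, e⟩⟩
    · exact ⟨0, fun h => absurd h hy⟩
  choose g hg using hch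
  refine ⟨htf.toFinset.image g, ?_, ?_⟩
  · intro s hs
    obtain ⟨y, hy, rfl⟩ := Finset.mem_image.mp hs
    exact ((hg y) (htf.mem_toFinset.mp hy)).1.1
  · intro c hc hc1
    have hm : ρ c ∈ ρ '' Ball := ⟨c, ⟨hc, hc1⟩, rfl⟩
    obtain ⟨y, hy, hyd⟩ := mem_iUnion₂.mp (hcov hm)
    obtain ⟨hgB, hgy⟩ := hg y hy
    refine ⟨g y, Finset.mem_image.mpr ⟨y, htf.mem_toFinset.mpr hy, rfl⟩, ?_⟩
    have hd : FinH 1 (c - g y) := hc.2.sub hgB.1.2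
    have hd1 : hN 1 (c - g y) ≤ 2 := by
      have := hN_sub_le hc.2 hgB.1.2
      have := hgB.2
      linarith
    have hmode : ∀ k ∈ F, ‖(c - g y) k‖ ≤ δ := by
      intro k hk
      have h1 : dist (ρ c ⟨k, hk⟩) (y ⟨k, hk⟩) ≤ dist (ρ c) y := dist_le_pi_dist _ _ _
      rw [← hgy, dist_eq_norm] at h1
      refine h1.trans ?_
      rw [hgy]
      exact (Metric.mem_ball.mp hyd).le
    have hk : ∀ k, lam k ^ (0:ℝ) * ‖(c - g y) k‖ ^ 2 ≤
        (if k ∈ F then δ ^ 2 else 0) + N⁻¹ * (lam k ^ (1:ℝ) * ‖(c - g y) k‖ ^ 2) := by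
      intro k
      rw [Real.rpow_zero, Real.rpow_one, one_mul]
      have hl := lam_pos k
      by_cases hkF : k ∈ F
      · rw [if_pos hkF]
        have h1 := pow_le_pow_left₀ (norm_nonneg _) (hmode k hkF) 2
        have h2 : 0 ≤ N⁻¹ * (lam k * ‖(c - g y) k‖ ^ 2) := by positivity
        linarith
      · rw [if_neg hkF, zero_add]
        have h1 : N ≤ lam k := by
          by_contra h
          exact hkF ((lam_finite N).mem_toFinset.mpr (not_le.mp h))
        rw [← mul_assoc]
        have h2 : 1 ≤ N⁻¹ * lam k := by
          rw [inv_mul_eq_div, le_div_iff₀ hNp]; linarith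
        exact le_mul_of_one_le_left (sq_nonneg _) h2
    have hfin := finH_of_sum_le (α := 0) (c := c - g y) (M := 3 / 4 * ε) (by positivity) ?_
    · have := hfin.2
      linarith
    · intro S
      refine (Finset.sum_le_sum fun k _ => hk k).trans ?_
      rw [Finset.sum_add_distrib, ← Finset.mul_sum]
      have h1 := sum_le_hN hd S
      have h2 : hN 1 (c - g y) ^ 2 ≤ 4 := by
        have := pow_le_pow_left₀ (hN_nonneg _ _) hd1 2
        linarith
      have h3 : ∑ k ∈ S, (if k ∈ F then δ ^ 2 else 0) ≤ F.card * δ ^ 2 := by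
        rw [← Finset.sum_filter, Finset.sum_const, nsmul_eq_mul]
        apply mul_le_mul_of_nonneg_right _ (sq_nonneg _)
        exact_mod_cast Finset.card_le_card (fun k hk => (Finset.mem_filter.mp hk).2)
      have h4 : N⁻¹ * ∑ k ∈ S, lam k ^ (1:ℝ) * ‖(c - g y) k‖ ^ 2 ≤ N⁻¹ * 4 :=
        mul_le_mul_of_nonneg_left (h1.trans h2) (by positivity)
      have h5 : N⁻¹ * 4 = ε ^ 2 / 4 := by
        rw [hN']; field_simp; norm_num
      have h6 : (F.card : ℝ) * δ ^ 2 ≤ ε ^ 2 / 4 := by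
        have hc0 : (0:ℝ) ≤ F.card := Nat.cast_nonneg _
        have e : (F.card : ℝ) * δ ^ 2 = ε ^ 2 / 4 * (F.card / ((F.card : ℝ) + 1) ^ 2) := by
          rw [hδ]; field_simp; norm_num
        rw [e]
        apply mul_le_of_le_one_right (by positivity)
        rw [div_le_one (by positivity)]
        nlinarith
      nlinarith [sq_nonneg ε]

variable {ν T : ℝ} {f : Coef} {u : Coef → ℝ → Coef} {θ₀ : Coef}

/-- `Ḣ¹` as a real submodule of the coefficient space. -/
def H1 : Submodule ℝ Coef where
  carrier := {c | MemH 1 c}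
  add_mem' := fun a b => a.add b
  zero_mem' := ⟨fun k => by simp, finH_zero 1⟩
  smul_mem' := fun r _ h => h.smul r

theorem Ctx.V_lin (C : Ctx ν T f u θ₀) {t : ℝ} (ht : t ∈ Icc (0:ℝ) T) :
    ∃ Λ : Coef →ₗ[ℝ] Coef, ∀ ξ, MemH 1 ξ → Λ ξ = Vd u θ₀ t ξ := by
  let g : H1 →ₗ[ℝ] Coef :=
    { toFun := fun ξ => Vd u θ₀ t ξ.1
      map_add' := fun a b => C.V_add a.2 b.2 ht
      map_smul' := fun r a => C.V_smul a.2 r ht }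
  obtain ⟨Λ, hΛ⟩ := g.exists_extend
  refine ⟨Λ, fun ξ hξ => ?_⟩
  exact LinearMap.congr_fun hΛ (⟨ξ, hξ⟩ : H1)

theorem Ctx.compact (C : Ctx ν T f u θ₀) {t : ℝ} (ht : t ∈ Icc (0:ℝ) T)
    {Λ : Coef →ₗ[ℝ] Coef} (hΛ : ∀ ξ, MemH 1 ξ → Λ ξ = Vd u θ₀ t ξ) : IsCompactOp 1 0 Λ := by
  classical
  refine ⟨⟨fun c d => map_add _ _ _, fun r c => map_smul _ _ _⟩, fun c hc => ?_, fun ε hε => ?_⟩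
  · rw [hΛ c hc]
    exact ⟨C.V_real hc ht, C.finV hc ht⟩
  · set L := √(Lc ν T (hN 0 f) (hN 1 θ₀)) with hL
    have hL0 : 0 ≤ L := Real.sqrt_nonneg _
    obtain ⟨S, hS, hcov⟩ := ball_net (ε := ε / (L + 1)) (by positivity)
    refine ⟨S.image Λ, fun c hc hc1 => ?_⟩
    obtain ⟨s, hs, hd⟩ := hcov c hc hc1
    refine ⟨Λ s, Finset.mem_image_of_mem _ hs, ?_⟩
    have hm : MemH 1 (c - s) := hc.sub (hS s hs)
    rw [← map_sub, hΛ _ hm]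
    refine (C.V_bound hm ht).trans_lt ?_
    rw [lt_div_iff₀ (by positivity)] at hd
    have := hN_nonneg 0 (c - s)
    have h2 : hN 0 (c - s) ≤ hN 0 (c - s) * (L + 1) := le_mul_of_one_le_right this (by linarith)
    rcases eq_or_lt_of_le this with h0 | h0
    · rw [← h0]; simpa using hε
    · nlinarith

/-- The linearisation at a fixed base point. -/
theorem Ctx.main (C : Ctx ν T f u θ₀) : ∃ Λ : ℝ → Coef → Coef,
    (∀ t ∈ Icc (0:ℝ) T, IsCompactOp 1 0 (Λ t)) ∧
    (∀ ξ, MemH 1 ξ → IsLinSol ν (u θ₀) T ξ (fun t => Λ t ξ)) ∧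
    (∀ B, hN 1 θ₀ ≤ B → ∀ θ, MemH 1 θ → ∀ t ∈ Icc (0:ℝ) T,
      hN 0 (u θ t - u θ₀ t - Λ t (θ - θ₀)) ≤
        2 * Kc ν T (hN 0 f) B * hN 0 (θ - θ₀) ^ 2) := by
  classical
  have h1 : ∀ t, ∃ Λ : Coef →ₗ[ℝ] Coef, t ∈ Icc (0:ℝ) T →
      ∀ ξ, MemH 1 ξ → Λ ξ = Vd u θ₀ t ξ := by
    intro t
    by_cases ht : t ∈ Icc (0:ℝ) T
    · obtain ⟨Λ, hΛ⟩ := C.V_lin ht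
      exact ⟨Λ, fun _ => hΛ⟩
    · exact ⟨0, fun h => absurd h ht⟩
  choose Λ hΛ using h1
  have h2 : ∀ (ξ : Coef) (k : Freq), ∃ E : ℝ → ℂ, MemH 1 ξ →
      (∀ t ∈ Icc (0:ℝ) T, E t = Vd u θ₀ t ξ k) ∧
      ∀ t ∈ Ioc (0:ℝ) T, HasDerivAt E (Gd ν u θ₀ ξ k t) t := by
    intro ξ k
    by_cases hξ : MemH 1 ξ
    · obtain ⟨E, hE⟩ := C.V_ext hξ k
      exact ⟨E, fun _ => hE⟩
    · exact ⟨0, fun h => absurd h hξ⟩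
  choose E hE using h2
  set Λ' : ℝ → Coef → Coef := fun t ξ =>
    if t ∈ Icc (0:ℝ) T then Λ t ξ else fun k => E ξ k t with hΛ'
  have e1 : ∀ t ∈ Icc (0:ℝ) T, Λ' t = Λ t := by
    intro t ht
    funext ξ
    simp only [hΛ', if_pos ht]
  have e2 : ∀ t ∈ Icc (0:ℝ) T, ∀ ξ, MemH 1 ξ → Λ' t ξ = Vd u θ₀ t ξ := by
    intro t ht ξ hξ
    rw [e1 t ht, hΛ t ht ξ hξ]
  have e3 : ∀ ξ, MemH 1 ξ → ∀ k t, Λ' t ξ k = E ξ k t := by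
    intro ξ hξ k t
    by_cases ht : t ∈ Icc (0:ℝ) T
    · rw [e2 t ht ξ hξ, (hE ξ k hξ).1 t ht]
    · simp only [hΛ', if_neg ht]
  refine ⟨Λ', ?_, ?_, ?_⟩
  · intro t ht
    rw [e1 t ht]
    exact C.compact ht (hΛ t ht)
  · intro ξ hξ
    refine ⟨?_, ?_, ?_⟩
    · show Λ' 0 ξ = ξ
      rw [e2 0 ⟨le_refl _, C.hT⟩ ξ hξ, C.V_zero hξ]
    · intro t ht
      show IsReal (Λ' t ξ)
      rw [e2 t ht ξ hξ]
      exact C.V_real hξ ht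
    · intro k t ht
      have hf : (fun s => Λ' s ξ k) = E ξ k := funext fun s => e3 ξ hξ k s
      show HasDerivAt (fun s => Λ' s ξ k) _ t
      rw [hf]
      refine ((hE ξ k hξ).2 t ht).congr_deriv ?_
      show _ = (0:ℂ) - ((ν * lam k : ℝ) : ℂ) * Λ' t ξ k - Bc (u θ₀ t) (Λ' t ξ) k -
        Bc (Λ' t ξ) (u θ₀ t) k
      rw [e2 t (Ioc_subset_Icc_self ht) ξ hξ]
      unfold Gd
      ring
  · intro B hB θ hθ t ht
    have hm : MemH 1 (θ - θ₀) := hθ.sub C.hθ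
    rw [e2 t ht _ hm]
    have := (C.W_V hB hm one_ne_zero ht).2
    simpa [Wq] using this

end

/-- Proposition `PropExistLin`. Linearisation of the
Navier–Stokes flow: given `ν>0`, `f ∈ Ḣ_⋄` and the family of strong solutions
`θ ↦ u_θ` on `[0,T]`, there is a family of compact linear operators
`Λ_{θ₀,t} : Ḣ¹_⋄ → Ḣ_⋄` (for `θ₀ ∈ Ḣ¹_⋄` and `t ∈ (0,T]`) such that
(i) `‖u_θ(t) − u_{θ₀}(t) − Λ_{θ₀,t}[θ−θ₀]‖_{L²} / ‖θ−θ₀‖_{L²} → 0` as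
`‖θ−θ₀‖_{L²} → 0`; (ii) for `ξ ∈ Ḣ¹_⋄` the map `t ↦ Λ_{θ₀,t}[ξ]` solves
`dU/dt − νΔU + B[u_{θ₀},U] + B[U,u_{θ₀}] = 0`, `U(0) = ξ`; and (iii) for any
`T>0`, `B>0` there is `c = c(ν,‖f‖_{L²},T,B) > 0` with
`sup_{0≤t≤T} ‖u_θ(t) − u_{θ₀}(t) − Λ_{θ₀,t}[θ−θ₀]‖_{L²} ≤ c ‖θ−θ₀‖²_{L²}`
for all `‖θ₀‖_{Ḣ¹} ≤ B` and all `θ ∈ Ḣ¹_⋄`. -/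
theorem statement5 (T ν : ℝ) (hT : 0 < T) (hν : 0 < ν) (f : Coef) (hf : MemH 0 f)
    (u : Coef → ℝ → Coef) (hu : ∀ θ, MemH 1 θ → IsNSSol ν f T θ (u θ)) :
    ∃ Λ : Coef → ℝ → Coef → Coef,
      (∀ θ₀, MemH 1 θ₀ → ∀ t ∈ Ioc (0:ℝ) T, IsCompactOp 1 0 (Λ θ₀ t)) ∧
      (∀ θ₀, MemH 1 θ₀ → ∀ t ∈ Ioc (0:ℝ) T, ∀ ε : ℝ, 0 < ε → ∃ δ : ℝ, 0 < δ ∧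
        ∀ θ, MemH 1 θ → 0 < hN 0 (θ - θ₀) → hN 0 (θ - θ₀) < δ →
          hN 0 (u θ t - u θ₀ t - Λ θ₀ t (θ - θ₀)) ≤ ε * hN 0 (θ - θ₀)) ∧
      (∀ θ₀, MemH 1 θ₀ → ∀ ξ, MemH 1 ξ →
        IsLinSol ν (u θ₀) T ξ (fun t => Λ θ₀ t ξ)) ∧
      (∀ B : ℝ, 0 < B → ∃ c : ℝ, 0 < c ∧
        ∀ θ₀ θ, MemH 1 θ₀ → hN 1 θ₀ ≤ B → MemH 1 θ →
          ∀ t ∈ Icc (0:ℝ) T,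
            hN 0 (u θ t - u θ₀ t - Λ θ₀ t (θ - θ₀)) ≤ c * hN 0 (θ - θ₀) ^ 2) := by
  classical
  have h1 : ∀ θ₀, ∃ Λ : ℝ → Coef → Coef, MemH 1 θ₀ →
      (∀ t ∈ Icc (0:ℝ) T, IsCompactOp 1 0 (Λ t)) ∧
      (∀ ξ, MemH 1 ξ → IsLinSol ν (u θ₀) T ξ (fun t => Λ t ξ)) ∧
      (∀ B, hN 1 θ₀ ≤ B → ∀ θ, MemH 1 θ → ∀ t ∈ Icc (0:ℝ) T,
        hN 0 (u θ t - u θ₀ t - Λ t (θ - θ₀)) ≤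
          2 * Kc ν T (hN 0 f) B * hN 0 (θ - θ₀) ^ 2) := by
    intro θ₀
    by_cases hθ : MemH 1 θ₀
    · obtain ⟨Λ, h⟩ := (Ctx.mk hT.le hν hf.2 hu hθ).main
      exact ⟨Λ, fun _ => h⟩
    · exact ⟨fun _ => id, fun h => absurd h hθ⟩
  choose Λ hΛ using h1
  refine ⟨Λ, ?_, ?_, ?_, ?_⟩
  · intro θ₀ hθ t ht
    exact (hΛ θ₀ hθ).1 t (Ioc_subset_Icc_self ht)
  · intro θ₀ hθ t ht ε hε
    have hK := Kc_pos hν T (hN 0 f) (hN 1 θ₀)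
    refine ⟨ε / (2 * Kc ν T (hN 0 f) (hN 1 θ₀)), by positivity, fun θ hθ' hpos hlt => ?_⟩
    refine ((hΛ θ₀ hθ).2.2 _ le_rfl θ hθ' t (Ioc_subset_Icc_self ht)).trans ?_
    rw [lt_div_iff₀ (by positivity)] at hlt
    rw [sq, ← mul_assoc]
    exact mul_le_mul_of_nonneg_right (by linarith) hpos.le
  · intro θ₀ hθ ξ hξ
    exact (hΛ θ₀ hθ).2.1 ξ hξ
  · intro B hB
    have hK := Kc_pos hν T (hN 0 f) B
    refine ⟨2 * Kc ν T (hN 0 f) B, by positivity, fun θ₀ θ hθ hb hθ' t ht => ?_⟩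
    exact (hΛ θ₀ hθ).2.2 B hb θ hθ' t ht

end NS2D
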